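/- Let r* ∈ Ω be a constant α-curvature metric (K_i(r*) = s_α(r*)·(r*_i)^α for all i). Let Σ* = diag(r*_1,…,r*_N) and Λ_α = (Σ*)^{−α/2} L(r*) (Σ*)^{−α/2}, and let λ₁ denote the smallest positive eigenvalue of the symmetric positive semi-definite matrix Λ_α. If λ₁ > α·s_α(r*), then there is a neighborhood U of r* in Ω such that every solution r(t) of the α-flow with r(0) ∈ U and Π_{i=1}^N r_i(0) = Π_{i=1}^N r*_i exists for all time t ≥ 0 and converges exponentially fast to r*, i.e. there exist C, β > 0 with ‖r(t) − r*‖ ≤ C e^{−βt} for all t ≥ 0. -/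

import Mathlib

/-!
Write `u_i = ln r_i`, `p = u(r*)` and `V(u) = ∑ (u_i - p_i)²`. The function `V` is a strict Lyapunov
function for the flow near `p` on the hyperplane `∑ u_i = ∑ p_i`, which encodes the prescribed
product of the radii. The hyperplane is invariant because `∑ K_i` does not depend on the metric
(the angles of a triangle add up to `π`) and equals `2πχ` at `r*`, so the right-hand side of the
flow sums to zero.

*Jacobian of the curvature.* In a triangle with radii `x, y, z`, the derivative of the angle at the
first vertex along a direction `(X, Y, Z)` is a positive multiple of `h_xy (Y - X) + h_xz (Z - X)`
with an explicit edge weight `h` (`wt`, `angle_coeff`) symmetric in the two ends of the edge.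
Consequently `L(r)` is symmetric and its quadratic form is a sum over faces of
`∑_edges h_e (difference along e)²`. Single weights may be negative, but the form on one face is
definite modulo constants: with the squared lengths `A, B, C` of the sides and their weights
`u, v, w`, the quantities `u A + v B + w C` and `u v + u w + v w` are both positive
(`wt_form_pos`). Since the 1-skeleton is connected, the kernel of `L(r)` is exactly the line of
constant vectors.

*Negativity of the linearization.* Let `r = r*` and let `m` be the mean of `X` with weights
`r_i^α`. The quadratic form of the linearized flow at `r` is
`α s_α ∑ r_i^α (X_i - m)² - ⟨X, L X⟩`. The vector `y_i = r_i^{α/2} (X_i - m)` is orthogonal to the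
kernel of `Λ_α`, so the spectral assumption makes this negative unless `X` is constant
(`spectral_gap`, `curvForm_gap`, `linearization_neg`).

*Conclusion.* A compactness argument gives `⟨u - p, F u⟩ ≤ -c V(u)` near `p`
(`exists_quadratic_bound`), whence `V(u(t)) ≤ ρ e^{-ct}` (`lyapunov_decay`). For existence for all
time, `F` is precomposed with the projection onto a small box around `p`; the resulting field is
globally Lipschitz and bounded, and the Lyapunov estimate keeps its solutions inside the box, where
nothing was changed (`exists_solution_near`).
-/

open Real Filter Topology

namespace IDCP

variable {N : ℕ}

/-- The set of edges: 2-element subsets of vertices contained in some face. -/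
def edges (Fc : Finset (Finset (Fin N))) : Finset (Finset (Fin N)) :=
  Fc.biUnion fun f => f.powersetCard 2

/-- `Fc` is the face set of a triangulation of a closed connected surface:
every face has 3 vertices, every edge lies in exactly two faces, and the
1-skeleton is connected. -/
structure IsTriangulation (Fc : Finset (Finset (Fin N))) : Prop where
  card3 : ∀ f ∈ Fc, f.card = 3
  edge2 : ∀ e ∈ edges Fc, (Fc.filter fun f => e ⊆ f).card = 2
  conn : (SimpleGraph.fromRel fun i j => ({i, j} : Finset (Fin N)) ∈ edges Fc).Connected

/-- Euler characteristic χ(M) = N − |E| + |F|. -/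
def chi (Fc : Finset (Finset (Fin N))) : ℤ :=
  (N : ℤ) - ((edges Fc).card : ℤ) + (Fc.card : ℤ)

/-- Edge length l_ij = √(r_i² + r_j² + 2 r_i r_j I_{ij}). -/
noncomputable def len (I : Finset (Fin N) → ℝ) (r : Fin N → ℝ) (i j : Fin N) : ℝ :=
  Real.sqrt (r i ^ 2 + r j ^ 2 + 2 * r i * r j * I {i, j})

/-- The cosine of the inner angle at `i` in triangle `{i,j,k}`. -/
noncomputable def cosAng (I : Finset (Fin N) → ℝ) (r : Fin N → ℝ) (i j k : Fin N) : ℝ :=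
  (len I r i j ^ 2 + len I r i k ^ 2 - len I r j k ^ 2) / (2 * len I r i j * len I r i k)

/-- The auxiliary function Λ. -/
noncomputable def Lam (x : ℝ) : ℝ :=
  if x ≤ -1 then π else if x ≤ 1 then Real.arccos x else 0

/-- Discrete Gaussian curvature K_i = 2π − Σ_{{i,j,k}∈F} θ_i^{jk}.  Every face
containing `i` appears exactly twice (once for each ordering of `j,k`), whence
the factor 1/2. -/
noncomputable def K (Fc : Finset (Finset (Fin N))) (I : Finset (Fin N) → ℝ)
    (r : Fin N → ℝ) (i : Fin N) : ℝ :=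
  2 * π - (1 / 2) * ∑ j, ∑ k,
    (if ({i, j, k} : Finset (Fin N)) ∈ Fc then Real.arccos (cosAng I r i j k) else 0)

/-- Extended curvature K̃_i = 2π − Σ θ̃_i^{jk}, using the generalized angles Λ. -/
noncomputable def Kt (Fc : Finset (Finset (Fin N))) (I : Finset (Fin N) → ℝ)
    (r : Fin N → ℝ) (i : Fin N) : ℝ :=
  2 * π - (1 / 2) * ∑ j, ∑ k,
    (if ({i, j, k} : Finset (Fin N)) ∈ Fc then Lam (cosAng I r i j k) else 0)

/-- The set Ω of inversive distance circle packing metrics. -/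
def Omega (Fc : Finset (Finset (Fin N))) (I : Finset (Fin N) → ℝ) : Set (Fin N → ℝ) :=
  {r | (∀ i, 0 < r i) ∧ ∀ i j k : Fin N, ({i, j, k} : Finset (Fin N)) ∈ Fc →
    len I r j k < len I r i j + len I r i k}

/-- s_α = 2πχ(M)/‖r‖_α^α. -/
noncomputable def sA (Fc : Finset (Finset (Fin N))) (α : ℝ) (r : Fin N → ℝ) : ℝ :=
  2 * π * (chi Fc : ℝ) / ∑ j, r j ^ α

/-- Back from u-coordinates: r_i = e^{u_i}. -/
noncomputable def rOf (u : Fin N → ℝ) : Fin N → ℝ := fun i => Real.exp (u i)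

/-- ln Ω, the image of Ω under the coordinate change r ↦ u, u_i = ln r_i. -/
def lnOmega (Fc : Finset (Finset (Fin N))) (I : Finset (Fin N) → ℝ) : Set (Fin N → ℝ) :=
  {u | rOf u ∈ Omega Fc I}

/-- `u` solves the α-flow du_i/dt = s_α r_i^α − K_i on the time set `D`,
staying in ln Ω. -/
def IsFlowSol (Fc : Finset (Finset (Fin N))) (I : Finset (Fin N) → ℝ) (α : ℝ)
    (D : Set ℝ) (u : ℝ → Fin N → ℝ) : Prop :=
  ∀ t ∈ D, rOf (u t) ∈ Omega Fc I ∧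
    ∀ i, HasDerivWithinAt (fun s => u s i)
      (sA Fc α (rOf (u t)) * rOf (u t) i ^ α - K Fc I (rOf (u t)) i) D t

/-- `u` solves the extended α-flow du_i/dt = s_α r_i^α − K̃_i on the time set `D`. -/
def IsExtFlowSol (Fc : Finset (Finset (Fin N))) (I : Finset (Fin N) → ℝ) (α : ℝ)
    (D : Set ℝ) (u : ℝ → Fin N → ℝ) : Prop :=
  ∀ t ∈ D, ∀ i, HasDerivWithinAt (fun s => u s i)
      (sA Fc α (rOf (u t)) * rOf (u t) i ^ α - Kt Fc I (rOf (u t)) i) D t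

/-- Lk(A): pairs (e,v) with both endpoints of e outside A, v ∈ A, and e,v spanning a face. -/
def Lk (Fc : Finset (Finset (Fin N))) (A : Finset (Fin N)) :
    Finset (Finset (Fin N) × Fin N) :=
  ((edges Fc) ×ˢ (Finset.univ : Finset (Fin N))).filter fun p =>
    (∀ x ∈ p.1, x ∉ A) ∧ p.2 ∈ A ∧ insert p.2 p.1 ∈ Fc

/-- Euler characteristic χ(F_A) of the subcomplex spanned by A. -/
def chiSub (Fc : Finset (Finset (Fin N))) (A : Finset (Fin N)) : ℤ :=
  (A.card : ℤ) - (((edges Fc).filter (fun e => e ⊆ A)).card : ℤ)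
    + ((Fc.filter (fun f => f ⊆ A)).card : ℤ)

/-- The lower bound −Σ_{(e,v)∈Lk(A)}(π − Λ(I_e)) + 2πχ(F_A) defining Y_A. -/
noncomputable def Ybound (Fc : Finset (Finset (Fin N))) (I : Finset (Fin N) → ℝ)
    (A : Finset (Fin N)) : ℝ :=
  -(∑ p ∈ Lk Fc A, (π - Lam (I p.1))) + 2 * π * (chiSub Fc A : ℝ)

/-- x ∈ Y. -/
noncomputable def memY (Fc : Finset (Finset (Fin N))) (I : Finset (Fin N) → ℝ)
    (x : Fin N → ℝ) : Prop :=
  (∑ i, x i) = 2 * π * (chi Fc : ℝ) ∧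
    ∀ A : Finset (Fin N), A.Nonempty → A ≠ Finset.univ → Ybound Fc I A < ∑ i ∈ A, x i

/-- x ∈ Ȳ. -/
noncomputable def memYbar (Fc : Finset (Finset (Fin N))) (I : Finset (Fin N) → ℝ)
    (x : Fin N → ℝ) : Prop :=
  (∑ i, x i) = 2 * π * (chi Fc : ℝ) ∧
    ∀ A : Finset (Fin N), A.Nonempty → A ≠ Finset.univ → Ybound Fc I A ≤ ∑ i ∈ A, x i

/-! ### Autonomous flows and the quadratic Lyapunov function -/

/-- A bounded, globally Lipschitz autonomous vector field has solutions on `[0, ∞)`: the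
Picard–Lindelöf solutions on the intervals `[0, n]` agree on overlaps and glue. -/
theorem exists_global_solution {E : Type*} [NormedAddCommGroup E] [NormedSpace ℝ E]
    [CompleteSpace E] {G : E → E} {κ B : NNReal} (hG : LipschitzWith κ G)
    (hB : ∀ x, ‖G x‖ ≤ B) (x₀ : E) :
    ∃ u : ℝ → E, u 0 = x₀ ∧
      ∀ t, 0 ≤ t → HasDerivWithinAt u (G (u t)) (Set.Ici 0) t := by
  have hsol : ∀ n : ℕ, ∃ v : ℝ → E, v 0 = x₀ ∧
      ∀ t ∈ Set.Icc (0 : ℝ) n, HasDerivWithinAt v (G (v t)) (Set.Icc 0 n) t := by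
    intro n
    have hn : (0 : ℝ) ≤ n := n.cast_nonneg
    have hPL : IsPicardLindelof (fun _ => G) (tmin := 0) (tmax := n) ⟨0, le_rfl, hn⟩ x₀
        (B * n) 0 B κ :=
      { lipschitzOnWith := fun t _ => hG.lipschitzOnWith
        continuousOn := fun x _ => continuousOn_const
        norm_le := fun t _ x _ => hB x
        mul_max_le := by simp }
    exact hPL.exists_eq_forall_mem_Icc_hasDerivWithinAt₀
  choose v hv0 hv using hsol
  have hcont : ∀ n, ContinuousOn (v n) (Set.Icc 0 n) := fun n =>
    HasDerivWithinAt.continuousOn (hv n)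
  have hright : ∀ n : ℕ, ∀ t ∈ Set.Ico (0 : ℝ) n,
      HasDerivWithinAt (v n) (G (v n t)) (Set.Ici t) t := by
    intro n t ht
    refine (hv n t ⟨ht.1, ht.2.le⟩).mono_of_mem_nhdsWithin ?_
    exact mem_of_superset (Icc_mem_nhdsGE ht.2) (Set.Icc_subset_Icc_left ht.1)
  have hagree : ∀ m n : ℕ, m ≤ n → Set.EqOn (v m) (v n) (Set.Icc 0 m) := by
    intro m n hmn
    have hmn' : (m : ℝ) ≤ n := by exact_mod_cast hmn
    exact ODE_solution_unique (v := fun _ => G) (fun _ => hG) (hcont m) (hright m)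
      ((hcont n).mono (Set.Icc_subset_Icc_right hmn'))
      (fun t ht => hright n t ⟨ht.1, ht.2.trans_le hmn'⟩) ((hv0 m).trans (hv0 n).symm)
  refine ⟨fun t => v (⌈t⌉₊ + 1) t, hv0 _, fun t ht => ?_⟩
  set n := ⌈t⌉₊ + 1 with hn
  have htn : t < n := (Nat.le_ceil t).trans_lt (by simp [hn])
  -- Near `t` the glued curve coincides with the single solution on `[0, n]`.
  have heq : ∀ s ∈ Set.Icc (0 : ℝ) n, v (⌈s⌉₊ + 1) s = v n s := by
    intro s hs
    have hs' : s ∈ Set.Icc (0 : ℝ) ((⌈s⌉₊ + 1 : ℕ) : ℝ) :=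
      ⟨hs.1, (Nat.le_ceil s).trans (by simp)⟩
    rcases le_total (⌈s⌉₊ + 1) n with h | h
    · exact hagree _ _ h hs'
    · exact (hagree _ _ h hs).symm
  have hmem : Set.Icc (0 : ℝ) n ∈ 𝓝[Set.Ici 0] t := by
    have := inter_mem_nhdsWithin (Set.Ici (0 : ℝ)) (Iic_mem_nhds htn)
    simpa [Set.Ici_inter_Iic] using this
  have h1 := (hv n t ⟨ht, htn.le⟩).mono_of_mem_nhdsWithin hmem
  exact h1.congr_of_eventuallyEq (mem_of_superset hmem heq) rfl

/-- If `⟨v - p, F v⟩ ≤ -c ‖v - p‖²` near `p` on the hyperplane through `p` orthogonal to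
`(1, …, 1)`, then solutions starting in that neighbourhood whose velocity stays parallel to the
hyperplane approach `p` exponentially. The factor in the exponent is `c` rather than `2c` so that
the comparison with the barrier `ρ e^{-ct}` is strict, as the fencing lemma requires. -/
theorem lyapunov_decay {ι : Type*} [Fintype ι] {F : (ι → ℝ) → ι → ℝ} {p : ι → ℝ} {ρ c : ℝ}
    (hρ : 0 < ρ) (hc : 0 < c)
    (hF : ∀ v : ι → ℝ, ∑ i, (v i - p i) = 0 → ∑ i, (v i - p i) ^ 2 ≤ ρ →
      ∑ i, (v i - p i) * F v i ≤ -c * ∑ i, (v i - p i) ^ 2)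
    {u : ℝ → ι → ℝ}
    (hu : ∀ t, 0 ≤ t → ∀ i, HasDerivWithinAt (fun s => u s i) (F (u t) i) (Set.Ici 0) t)
    (hsum : ∀ t, 0 ≤ t → ∑ i, F (u t) i = 0)
    (h0 : ∑ i, (u 0 i - p i) = 0) (h0ρ : ∑ i, (u 0 i - p i) ^ 2 ≤ ρ) {t : ℝ} (ht : 0 ≤ t) :
    ∑ i, (u t i - p i) ^ 2 ≤ ρ * exp (-c * t) := by
  have hright : ∀ t, 0 ≤ t → ∀ i, HasDerivWithinAt (fun s => u s i) (F (u t) i) (Set.Ici t) t :=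
    fun t ht i => (hu t ht i).mono (Set.Ici_subset_Ici.2 ht)
  have hcont : ∀ i, ContinuousOn (fun s => u s i) (Set.Ici 0) := fun i =>
    HasDerivWithinAt.continuousOn (fun t ht => hu t ht i)
  have hcons : ∀ t, 0 ≤ t → ∑ i, (u t i - p i) = 0 := by
    intro t ht
    rw [← h0]
    refine constant_of_has_deriv_right_zero (f := fun s => ∑ i, (u s i - p i)) (a := 0) (b := t)
      ?_ ?_ t ⟨ht, le_rfl⟩
    · exact (continuousOn_finsetSum _ fun i _ => (hcont i).sub continuousOn_const).mono
        Set.Icc_subset_Ici_self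
    · intro s hs
      rw [← hsum s hs.1]
      exact HasDerivWithinAt.fun_sum fun i _ => (hright s hs.1 i).sub_const _
  refine image_le_of_deriv_right_lt_deriv_boundary (f := fun s => ∑ i, (u s i - p i) ^ 2)
    (f' := fun s => ∑ i, 2 * (u s i - p i) * F (u s) i) (a := 0) (b := t)
    (B := fun s => ρ * exp (-c * s)) (B' := fun s => ρ * (exp (-c * s) * (-c))) ?_ ?_
    (by simpa using h0ρ) ?_ ?_ ⟨ht, le_rfl⟩
  · exact (continuousOn_finsetSum _ fun i _ => ((hcont i).sub continuousOn_const).pow 2).mono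
      Set.Icc_subset_Ici_self
  · intro s hs
    refine HasDerivWithinAt.fun_sum fun i _ => ?_
    simpa using! ((hright s hs.1 i).sub_const (p i)).pow 2
  · intro s
    have : HasDerivAt (fun s : ℝ => -c * s) (-c) s := by
      simpa using (hasDerivAt_id s).const_mul (-c)
    exact this.exp.const_mul ρ
  · intro s hs hfB
    have hpos : 0 < ρ * exp (-c * s) := by positivity
    have hle : ρ * exp (-c * s) ≤ ρ := by
      have : exp (-c * s) ≤ 1 := exp_le_one_iff.2 (by nlinarith [hs.1])
      nlinarith
    have h1 := hF (u s) (hcons s hs.1) (hfB.trans_le hle)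
    have h2 : ∑ i, 2 * (u s i - p i) * F (u s) i = 2 * ∑ i, (u s i - p i) * F (u s) i := by
      rw [Finset.mul_sum]; exact Finset.sum_congr rfl fun i _ => by ring
    simp only [h2]
    rw [hfB] at h1
    nlinarith

/-- Linearized stability on a hyperplane: if the quadratic form of the derivative at a zero `p` of
`F` is negative on nonzero vectors of sum zero, then `⟨v - p, F v⟩` is bounded by a negative
multiple of `‖v - p‖²` near `p`. -/
theorem exists_quadratic_bound {ι : Type*} [Fintype ι] {F : (ι → ℝ) → ι → ℝ} {p : ι → ℝ}
    {F' : (ι → ℝ) →L[ℝ] (ι → ℝ)} (hF : HasFDerivAt F F' p) (hp : F p = 0)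
    (hneg : ∀ x : ι → ℝ, ∑ i, x i = 0 → x ≠ 0 → ∑ i, x i * F' x i < 0) :
    ∃ ρ c : ℝ, 0 < ρ ∧ 0 < c ∧ ∀ v : ι → ℝ, ∑ i, (v i - p i) = 0 → ∑ i, (v i - p i) ^ 2 ≤ ρ →
      ∑ i, (v i - p i) * F v i ≤ -c * ∑ i, (v i - p i) ^ 2 := by
  have hle : ∀ (x : ι → ℝ) i, x i ^ 2 ≤ ∑ j, x j ^ 2 := fun x i =>
    Finset.single_le_sum (f := fun j => x j ^ 2) (fun j _ => sq_nonneg _) (Finset.mem_univ i)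
  have hnorm : ∀ x : ι → ℝ, ‖x‖ ^ 2 ≤ ∑ j, x j ^ 2 := by
    intro x
    have h0 : 0 ≤ ∑ j, x j ^ 2 := Finset.sum_nonneg fun j _ => sq_nonneg _
    have : ‖x‖ ≤ √(∑ j, x j ^ 2) := (pi_norm_le_iff_of_nonneg (sqrt_nonneg _)).2 fun i => by
      rw [Real.norm_eq_abs]; exact Real.abs_le_sqrt (hle x i)
    calc ‖x‖ ^ 2 ≤ √(∑ j, x j ^ 2) ^ 2 := by gcongr
      _ = _ := Real.sq_sqrt h0
  obtain ⟨c₀, hc₀, hquad⟩ : ∃ c₀ : ℝ, 0 < c₀ ∧ ∀ x : ι → ℝ, ∑ i, x i = 0 →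
      ∑ i, x i * F' x i ≤ -c₀ * ∑ i, x i ^ 2 := by
    let S : Set (ι → ℝ) := {x | ∑ i, x i = 0 ∧ ∑ i, x i ^ 2 = 1}
    have hSc : IsCompact S := by
      refine Metric.isCompact_of_isClosed_isBounded ?_ ?_
      · exact (isClosed_eq (by fun_prop) continuous_const).inter
          (isClosed_eq (by fun_prop) continuous_const)
      · refine (Metric.isBounded_iff_subset_closedBall 0).2 ⟨1, fun x hx => ?_⟩
        rw [mem_closedBall_zero_iff]
        have := hnorm x
        rw [hx.2] at this
        nlinarith [norm_nonneg x]
    have hqc : Continuous fun x : ι → ℝ => ∑ i, x i * F' x i := by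
      refine continuous_finsetSum _ fun i _ => (continuous_apply i).mul ?_
      exact (continuous_apply i).comp F'.continuous
    obtain ⟨c₀, hc₀, hS⟩ : ∃ c₀ : ℝ, 0 < c₀ ∧ ∀ x ∈ S, ∑ i, x i * F' x i ≤ -c₀ := by
      rcases S.eq_empty_or_nonempty with h | h
      · exact ⟨1, one_pos, by simp [h]⟩
      · obtain ⟨x, hx, hmax⟩ := hSc.exists_isMaxOn h hqc.continuousOn
        refine ⟨-∑ i, x i * F' x i, ?_, fun y hy => by simpa using hmax hy⟩
        have : x ≠ 0 := by rintro rfl; simpa using hx.2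
        linarith [hneg x hx.1 this]
    refine ⟨c₀, hc₀, fun x hx => ?_⟩
    by_cases hx0 : x = 0
    · simp [hx0]
    obtain ⟨j, hj⟩ := Function.ne_iff.1 hx0
    have hV : 0 < ∑ i, x i ^ 2 := lt_of_lt_of_le (by positivity [show x j ≠ 0 from hj]) (hle x j)
    set V := ∑ i, x i ^ 2
    set m := √V
    have hm : 0 < m := sqrt_pos.2 hV
    have hmV : m ^ 2 = V := Real.sq_sqrt hV.le
    have := hS (m⁻¹ • x) ⟨by simp [← Finset.mul_sum, hx], by
      simp only [Pi.smul_apply, smul_eq_mul, mul_pow, ← Finset.mul_sum]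
      change (m⁻¹) ^ 2 * V = 1
      rw [← hmV]; field_simp⟩
    have h2 : ∑ i, (m⁻¹ • x) i * F' (m⁻¹ • x) i = V⁻¹ * ∑ i, x i * F' x i := by
      rw [Finset.mul_sum, ← hmV]
      refine Finset.sum_congr rfl fun i _ => ?_
      simp only [map_smul, Pi.smul_apply, smul_eq_mul]
      field_simp
    rw [h2, inv_mul_le_iff₀ hV] at this
    linarith
  set n : ℝ := (Fintype.card ι : ℝ)
  have hn : 0 ≤ n := Nat.cast_nonneg _
  have hε : 0 < c₀ / (2 * (n + 1)) := by positivity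
  obtain ⟨δ, hδ, hball⟩ := Metric.eventually_nhds_iff.1 (hF.isLittleO.def hε)
  refine ⟨(δ / 2) ^ 2, c₀ / 2, by positivity, by positivity, fun v hv hvρ => ?_⟩
  set x := v - p with hx
  have hxi : ∀ i, v i - p i = x i := fun i => rfl
  simp only [hxi] at hv hvρ ⊢
  have hxn : ‖x‖ ≤ δ / 2 := abs_le_of_sq_le_sq' ((hnorm x).trans hvρ) (by positivity) |>.2
  have hlo := hball (y := v) (by rw [dist_eq_norm]; exact hxn.trans_lt (by linarith))
  rw [hp, sub_zero, ← hx] at hlo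
  set e := F v - F' x with he
  have hFv : ∀ i, F v i = F' x i + e i := fun i => by simp [he]
  have hsplit : ∑ i, x i * F v i = ∑ i, x i * F' x i + ∑ i, x i * e i := by
    rw [← Finset.sum_add_distrib]
    exact Finset.sum_congr rfl fun i _ => by rw [hFv]; ring
  have hVn := hnorm x
  have herr : ∑ i, x i * e i ≤ n * (c₀ / (2 * (n + 1)) * ‖x‖ ^ 2) := by
    have : ∀ i ∈ Finset.univ, x i * e i ≤ c₀ / (2 * (n + 1)) * ‖x‖ ^ 2 := by
      intro i _
      calc x i * e i ≤ |x i * e i| := le_abs_self _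
        _ = |x i| * |e i| := abs_mul _ _
        _ ≤ ‖x‖ * (c₀ / (2 * (n + 1)) * ‖x‖) := by
          gcongr
          · exact norm_le_pi_norm x i
          · exact (norm_le_pi_norm e i).trans hlo
        _ = _ := by ring
    simpa [n] using Finset.sum_le_card_nsmul _ _ _ this
  have hfrac : n * (c₀ / (2 * (n + 1)) * ‖x‖ ^ 2) ≤ c₀ / 2 * ‖x‖ ^ 2 := by
    have : n * (c₀ / (2 * (n + 1))) ≤ c₀ / 2 := by
      rw [mul_div_assoc', div_le_div_iff₀ (by positivity) (by positivity)]
      nlinarith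
    nlinarith [sq_nonneg ‖x‖]
  have := hquad x hv
  rw [hsplit]
  nlinarith

/-- Solutions starting near the stable zero `p` exist for all time and stay in the ball on which
`F` is Lipschitz. `F` need not be controlled outside that ball, because it is replaced there by its
value at the coordinatewise projection `π₀` onto the ball, which for the sup norm is a box. -/
theorem exists_solution_near {ι : Type*} [Fintype ι] {F : (ι → ℝ) → ι → ℝ} {p : ι → ℝ}
    {δ ρ c : ℝ} (hδ : 0 < δ) {κ : NNReal} (hL : LipschitzOnWith κ F (Metric.closedBall p δ))
    (hsum : ∀ v ∈ Metric.closedBall p δ, ∑ i, F v i = 0) (hρ : 0 < ρ) (hρδ : ρ ≤ δ ^ 2)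
    (hc : 0 < c)
    (hF : ∀ v : ι → ℝ, ∑ i, (v i - p i) = 0 → ∑ i, (v i - p i) ^ 2 ≤ ρ →
      ∑ i, (v i - p i) * F v i ≤ -c * ∑ i, (v i - p i) ^ 2)
    {u₀ : ι → ℝ} (h0 : ∑ i, (u₀ i - p i) = 0) (h0ρ : ∑ i, (u₀ i - p i) ^ 2 ≤ ρ) :
    ∃ u : ℝ → ι → ℝ, u 0 = u₀ ∧ ∀ t, 0 ≤ t → u t ∈ Metric.closedBall p δ ∧
      ∀ i, HasDerivWithinAt (fun s => u s i) (F (u t) i) (Set.Ici 0) t := by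
  let π₀ : (ι → ℝ) → ι → ℝ := fun v i => max (p i - δ) (min (p i + δ) (v i))
  have hπmem : ∀ v, π₀ v ∈ Metric.closedBall p δ := by
    intro v
    rw [Metric.mem_closedBall, dist_pi_le_iff hδ.le]
    intro i
    rw [Real.dist_eq, abs_le]
    have h1 : p i - δ ≤ π₀ v i := le_max_left _ _
    have h2 : π₀ v i ≤ p i + δ := max_le (by linarith) (min_le_left _ _)
    constructor <;> linarith
  have hπfix : ∀ v ∈ Metric.closedBall p δ, π₀ v = v := by
    intro v hv
    rw [Metric.mem_closedBall, dist_pi_le_iff hδ.le] at hv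
    funext i
    have := hv i
    rw [Real.dist_eq, abs_le] at this
    simp only [π₀]
    rw [min_eq_right (by linarith), max_eq_right (by linarith)]
  have hπlip : LipschitzWith 1 π₀ := by
    refine LipschitzWith.of_dist_le_mul fun v w => ?_
    rw [NNReal.coe_one, one_mul, dist_pi_le_iff dist_nonneg]
    intro i
    have h := ((LipschitzWith.id (α := ℝ)).const_min (p i + δ)).const_max (p i - δ)
    have := h.dist_le_mul (v i) (w i)
    rw [NNReal.coe_one, one_mul] at this
    exact this.trans (dist_le_pi_dist v w i)
  have hball : ∀ v : ι → ℝ, ∑ i, (v i - p i) ^ 2 ≤ ρ → v ∈ Metric.closedBall p δ := by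
    intro v hv
    rw [Metric.mem_closedBall, dist_pi_le_iff hδ.le]
    intro i
    rw [Real.dist_eq]
    refine abs_le_of_sq_le_sq ?_ hδ.le
    exact (Finset.single_le_sum (f := fun j => (v j - p j) ^ 2) (fun j _ => sq_nonneg _)
      (Finset.mem_univ i)).trans (hv.trans hρδ)
  have hGlip : LipschitzWith κ (F ∘ π₀) := by
    have := hL.comp (hπlip.lipschitzOnWith (s := Set.univ)) (fun v _ => hπmem v)
    rw [mul_one] at this
    exact lipschitzOnWith_univ.1 this
  have hp : p ∈ Metric.closedBall p δ := Metric.mem_closedBall_self hδ.le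
  have hGbd : ∀ v, ‖(F ∘ π₀) v‖ ≤ (‖F p‖₊ + κ * δ.toNNReal : NNReal) := by
    intro v
    have h1 := hL.dist_le_mul _ (hπmem v) _ hp
    rw [dist_eq_norm] at h1
    have h2 : (κ : ℝ) * dist (π₀ v) p ≤ κ * δ := by
      gcongr; exact hπmem v
    have h3 := norm_le_norm_add_norm_sub' (F (π₀ v)) (F p)
    rw [NNReal.coe_add, NNReal.coe_mul, Real.coe_toNNReal δ hδ.le, coe_nnnorm, Function.comp]
    linarith
  obtain ⟨u, hu0, hu⟩ := exists_global_solution hGlip hGbd u₀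
  refine ⟨u, hu0, fun t ht => ?_⟩
  have hu' : ∀ t, 0 ≤ t → ∀ i,
      HasDerivWithinAt (fun s => u s i) ((F ∘ π₀) (u t) i) (Set.Ici 0) t :=
    fun t ht => hasDerivWithinAt_pi.1 (hu t ht)
  have hdec := lyapunov_decay (F := F ∘ π₀) (u := u) hρ hc (fun v hv hvρ => by
      rw [Function.comp, hπfix v (hball v hvρ)]; exact hF v hv hvρ) hu'
    (fun t _ => hsum _ (hπmem _)) (by rw [hu0]; exact h0) (by rw [hu0]; exact h0ρ) ht
  have hle : ∑ i, (u t i - p i) ^ 2 ≤ ρ := by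
    have : exp (-c * t) ≤ 1 := exp_le_one_iff.2 (by nlinarith)
    nlinarith
  refine ⟨hball _ hle, fun i => ?_⟩
  have := hu' t ht i
  rwa [Function.comp, hπfix _ (hball _ hle)] at this

/-- Exponential decay in the logarithmic coordinates gives exponential decay of the radii. -/
theorem norm_exp_sub_le {ι : Type*} [Fintype ι] {v p : ι → ℝ} {ρ c t : ℝ} (hρ : ρ ≤ 1)
    (hc : 0 < c) (ht : 0 ≤ t) (hv : ∑ i, (v i - p i) ^ 2 ≤ ρ * exp (-c * t)) :
    ‖(fun i => exp (v i)) - fun i => exp (p i)‖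
      ≤ (1 + 2 * ∑ i, exp (p i)) * exp (-(c / 2) * t) := by
  have hS : 0 ≤ ∑ i, exp (p i) := Finset.sum_nonneg fun i _ => (exp_pos _).le
  refine (pi_norm_le_iff_of_nonneg (by positivity)).2 fun i => ?_
  have h1 : (v i - p i) ^ 2 ≤ exp (-(c / 2) * t) ^ 2 := by
    rw [← Real.exp_nat_mul]
    calc (v i - p i) ^ 2 ≤ ∑ j, (v j - p j) ^ 2 :=
          Finset.single_le_sum (f := fun j => (v j - p j) ^ 2) (fun j _ => sq_nonneg _)
            (Finset.mem_univ i)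
      _ ≤ ρ * exp (-c * t) := hv
      _ ≤ 1 * exp (-c * t) := by gcongr
      _ = _ := by rw [one_mul]; congr 1; push_cast; ring
  have h2 : |v i - p i| ≤ exp (-(c / 2) * t) := abs_le_of_sq_le_sq h1 (exp_pos _).le
  have h3 : exp (-(c / 2) * t) ≤ 1 := exp_le_one_iff.2 (by nlinarith)
  have h4 := Real.abs_exp_sub_one_le (h2.trans h3)
  have h5 : exp (v i) - exp (p i) = exp (p i) * (exp (v i - p i) - 1) := by
    rw [mul_sub, ← exp_add]; simp
  rw [Pi.sub_apply, Real.norm_eq_abs, h5, abs_mul, abs_of_pos (exp_pos _)]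
  have h6 : exp (p i) ≤ ∑ j, exp (p j) :=
    Finset.single_le_sum (f := fun j => exp (p j)) (fun j _ => (exp_pos _).le) (Finset.mem_univ i)
  calc exp (p i) * |exp (v i - p i) - 1| ≤ (∑ j, exp (p j)) * (2 * exp (-(c / 2) * t)) := by
        gcongr
        exact h4.trans (by gcongr)
    _ ≤ _ := by nlinarith [exp_pos (-(c / 2) * t)]

/-! ### Spectral gap of a semidefinite matrix with one-dimensional kernel -/

/-- If every positive eigenvalue of the positive semidefinite matrix `M` exceeds `κ` and the kernel
of `M` lies in the line spanned by `w`, then `⟨y, M y⟩ > κ ‖y‖²` for nonzero `y` orthogonal to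
`w`. -/
theorem spectral_gap {ι : Type*} [Fintype ι] [DecidableEq ι] {M : Matrix ι ι ℝ}
    (hM : M.IsHermitian) (hpsd : ∀ y : ι → ℝ, 0 ≤ y ⬝ᵥ M.mulVec y) {w : ι → ℝ}
    (hker : ∀ y : ι → ℝ, y ⬝ᵥ M.mulVec y = 0 → ∃ c : ℝ, y = c • w) {κ : ℝ}
    (hκ : ∀ lam : ℝ, 0 < lam → (∃ v : ι → ℝ, v ≠ 0 ∧ M.mulVec v = lam • v) → κ < lam)
    {y : ι → ℝ} (hy : y ≠ 0) (hyw : y ⬝ᵥ w = 0) :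
    κ * (y ⬝ᵥ y) < y ⬝ᵥ M.mulVec y := by
  set b := hM.eigenvectorBasis
  set lam := hM.eigenvalues
  set Y : EuclideanSpace ℝ ι := WithLp.toLp 2 y with hY
  have hb : ∀ i, M.mulVec (b i).ofLp = lam i • (b i).ofLp := hM.mulVec_eigenvectorBasis
  have hbn : ∀ i, (b i).ofLp ≠ 0 := fun i h => b.toBasis.ne_zero i (by
    rw [OrthonormalBasis.coe_toBasis]; ext j; simpa using congrFun h j)
  have hinner : ∀ x z : EuclideanSpace ℝ ι, inner ℝ x z = x.ofLp ⬝ᵥ z.ofLp := fun x z => by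
    simp [EuclideanSpace.inner_eq_star_dotProduct, dotProduct_comm]
  have hbb : ∀ i, (b i).ofLp ⬝ᵥ (b i).ofLp = 1 := fun i => by
    rw [← hinner, b.inner_eq_one]
  set c : ι → ℝ := fun i => y ⬝ᵥ (b i).ofLp with hc
  have hself : y ⬝ᵥ y = ∑ i, c i * c i := by
    have := b.sum_inner_mul_inner Y Y
    simp only [hinner] at this
    rw [← this]
    exact Finset.sum_congr rfl fun i _ => by rw [hc, dotProduct_comm (b i).ofLp]
  have hMy : y ⬝ᵥ M.mulVec y = ∑ i, lam i * (c i * c i) := by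
    have := b.sum_inner_mul_inner Y (WithLp.toLp 2 (M.mulVec y))
    simp only [hinner] at this
    rw [← this]
    refine Finset.sum_congr rfl fun i _ => ?_
    have : (b i).ofLp ⬝ᵥ M.mulVec y = lam i * c i := by
      rw [Matrix.dotProduct_mulVec, ← Matrix.mulVec_transpose]
      have hT : M.transpose = M := by simpa using hM.eq
      rw [hT, hb, smul_dotProduct, smul_eq_mul, hc, dotProduct_comm]
    rw [this]
    change c i * _ = _
    ring
  have hlam : ∀ i, 0 ≤ lam i := fun i => by
    have := hpsd (b i).ofLp
    rwa [hb, dotProduct_smul, hbb, smul_eq_mul, mul_one] at this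
  -- Zero eigenvalues have eigenvectors along `w`, hence do not contribute to `y`.
  have hzero : ∀ i, lam i = 0 → c i = 0 := fun i hi => by
    obtain ⟨a, ha⟩ := hker (b i).ofLp (by rw [hb, hi]; simp)
    simp only [hc]
    rw [ha, dotProduct_smul, hyw, smul_zero]
  have hpos : ∀ i, c i ≠ 0 → κ < lam i := fun i hi =>
    hκ _ ((hlam i).lt_of_ne fun h => hi (hzero i h.symm)) ⟨_, hbn i, hb i⟩
  have hne : ∃ i, c i ≠ 0 := by
    by_contra! h
    have : y ⬝ᵥ y = 0 := by rw [hself]; simp [h]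
    exact hy (dotProduct_self_eq_zero.1 this)
  obtain ⟨j, hj⟩ := hne
  rw [hself, hMy, Finset.mul_sum]
  refine Finset.sum_lt_sum (fun i _ => ?_) ⟨j, Finset.mem_univ j, ?_⟩
  · by_cases hi : c i = 0
    · simp [hi]
    · have := hpos i hi
      have := mul_self_nonneg (c i)
      gcongr
  · have := hpos j hj
    have := mul_self_pos.2 hj
    gcongr

/-! ### Geometry of a single triangle -/

/-- Heron's polynomial in the squared side lengths: it is `16 · area²` of the triangle. -/
noncomputable def heron (A B C : ℝ) : ℝ := 2 * (A * B + B * C + C * A) - A ^ 2 - B ^ 2 - C ^ 2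

theorem heron_sq_pos {a b c : ℝ} (ha : a < b + c) (hb : b < a + c) (hc : c < a + b) :
    0 < heron (a ^ 2) (b ^ 2) (c ^ 2) := by
  have h : heron (a ^ 2) (b ^ 2) (c ^ 2)
      = (a + b + c) * (b + c - a) * (a + c - b) * (a + b - c) := by unfold heron; ring
  rw [h]
  have : 0 < a + b + c := by linarith
  have : 0 < b + c - a := by linarith
  have : 0 < a + c - b := by linarith
  have : 0 < a + b - c := by linarith
  positivity

theorem one_sub_cos_sq {a b c : ℝ} (ha : 0 < a) (hb : 0 < b) :
    1 - ((a ^ 2 + b ^ 2 - c ^ 2) / (2 * a * b)) ^ 2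
      = heron (a ^ 2) (b ^ 2) (c ^ 2) / (2 * a * b) ^ 2 := by
  unfold heron; field_simp; ring

theorem sqrt_one_sub_cos_sq {a b c : ℝ} (ha : 0 < a) (hb : 0 < b) :
    √(1 - ((a ^ 2 + b ^ 2 - c ^ 2) / (2 * a * b)) ^ 2)
      = √(heron (a ^ 2) (b ^ 2) (c ^ 2)) / (2 * a * b) := by
  rw [one_sub_cos_sq ha hb, Real.sqrt_div' _ (sq_nonneg _), Real.sqrt_sq (by positivity)]

theorem abs_cos_lt_one {a b c : ℝ} (ha : 0 < a) (hb : 0 < b)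
    (hS : 0 < heron (a ^ 2) (b ^ 2) (c ^ 2)) :
    -1 < (a ^ 2 + b ^ 2 - c ^ 2) / (2 * a * b) ∧ (a ^ 2 + b ^ 2 - c ^ 2) / (2 * a * b) < 1 := by
  have h := one_sub_cos_sq (c := c) ha hb
  have h2 : 0 < heron (a ^ 2) (b ^ 2) (c ^ 2) / (2 * a * b) ^ 2 := by positivity
  exact abs_lt.1 ((sq_lt_one_iff_abs_lt_one _).1 (by linarith))

/-- The angles of a nondegenerate triangle, given by the law of cosines, add up to `π`. -/
theorem angle_sum {a b c : ℝ} (ha : 0 < a) (hb : 0 < b) (hc : 0 < c)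
    (hS : 0 < heron (a ^ 2) (b ^ 2) (c ^ 2)) :
    arccos ((a ^ 2 + b ^ 2 - c ^ 2) / (2 * a * b)) + arccos ((c ^ 2 + a ^ 2 - b ^ 2) / (2 * c * a))
      + arccos ((b ^ 2 + c ^ 2 - a ^ 2) / (2 * b * c)) = π := by
  have hS2 : heron (c ^ 2) (a ^ 2) (b ^ 2) = heron (a ^ 2) (b ^ 2) (c ^ 2) := by unfold heron; ring
  have hS3 : heron (b ^ 2) (c ^ 2) (a ^ 2) = heron (a ^ 2) (b ^ 2) (c ^ 2) := by unfold heron; ring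
  have h1 := abs_cos_lt_one ha hb hS
  have h2 := abs_cos_lt_one hc ha (hS2 ▸ hS)
  have h3 := abs_cos_lt_one hb hc (hS3 ▸ hS)
  have s1 := sqrt_one_sub_cos_sq (c := c) ha hb
  have s2 := sqrt_one_sub_cos_sq (c := b) hc ha
  rw [hS2] at s2
  set S := √(heron (a ^ 2) (b ^ 2) (c ^ 2)) with hSdef
  have hSpos : 0 < S := sqrt_pos.2 hS
  have hSS : S ^ 2 = heron (a ^ 2) (b ^ 2) (c ^ 2) := Real.sq_sqrt hS.le
  set x := (a ^ 2 + b ^ 2 - c ^ 2) / (2 * a * b) with hx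
  set y := (c ^ 2 + a ^ 2 - b ^ 2) / (2 * c * a) with hy
  set z := (b ^ 2 + c ^ 2 - a ^ 2) / (2 * b * c) with hz
  have hsin : 0 < sin (arccos x + arccos y) := by
    rw [sin_add, sin_arccos, sin_arccos, cos_arccos h1.1.le h1.2.le, cos_arccos h2.1.le h2.2.le,
      s1, s2]
    have : S / (2 * a * b) * y + x * (S / (2 * c * a)) = S / (2 * b * c) := by
      rw [hx, hy]; field_simp; ring
    rw [this]; positivity
  have hle : arccos x + arccos y ≤ π := by
    by_contra! h
    have : sin (arccos x + arccos y - π) < 0 := by rw [sin_sub_pi]; linarith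
    have h0 : 0 ≤ sin (arccos x + arccos y - π) :=
      sin_nonneg_of_nonneg_of_le_pi (by linarith) (by linarith [arccos_le_pi x, arccos_le_pi y])
    linarith
  have hcos : cos (arccos x + arccos y) = -z := by
    rw [cos_add, sin_arccos, sin_arccos, cos_arccos h1.1.le h1.2.le, cos_arccos h2.1.le h2.2.le,
      s1, s2]
    have : S / (2 * a * b) * (S / (2 * c * a)) = S ^ 2 / (4 * a ^ 2 * b * c) := by
      field_simp; ring
    rw [this, hSS, hx, hy, hz]; unfold heron; field_simp; ring
  have : arccos x + arccos y = arccos (-z) := by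
    have h0 := add_nonneg (arccos_nonneg x) (arccos_nonneg y)
    rw [← hcos, arccos_cos h0 hle]
  rw [this, arccos_neg]; ring

/-- Variation of an angle in terms of the squared side lengths `A`, `B` (adjacent) and `C`
(opposite). -/
theorem hasDerivAt_angle_sq {A B C : ℝ → ℝ} {A' B' C' t : ℝ} (hA : HasDerivAt A A' t)
    (hB : HasDerivAt B B' t) (hC : HasDerivAt C C' t) (pA : 0 < A t) (pB : 0 < B t)
    (pC : 0 < C t) (hS : 0 < heron (A t) (B t) (C t)) :
    HasDerivAt (fun s => arccos ((√(A s) ^ 2 + √(B s) ^ 2 - √(C s) ^ 2) / (2 * √(A s) * √(B s))))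
      ((√(heron (A t) (B t) (C t)))⁻¹ * (C' - (C t + A t - B t) / (2 * A t) * A'
        - (C t + B t - A t) / (2 * B t) * B')) t := by
  have a0 := sqrt_pos.2 pA
  have b0 := sqrt_pos.2 pB
  have c0 := sqrt_pos.2 pC
  have eA : √(A t) ^ 2 = A t := Real.sq_sqrt pA.le
  have eB : √(B t) ^ 2 = B t := Real.sq_sqrt pB.le
  have eC : √(C t) ^ 2 = C t := Real.sq_sqrt pC.le
  have hS' : 0 < heron (√(A t) ^ 2) (√(B t) ^ 2) (√(C t) ^ 2) := by rwa [eA, eB, eC]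
  have hlt := abs_cos_lt_one a0 b0 hS'
  have hs := sqrt_one_sub_cos_sq (c := √(C t)) a0 b0
  have dA := hA.sqrt pA.ne'
  have dB := hB.sqrt pB.ne'
  have dC := hC.sqrt pC.ne'
  have hnum := ((dA.fun_pow 2).fun_add (dB.fun_pow 2)).fun_sub (dC.fun_pow 2)
  have hden := (dA.const_mul 2).fun_mul dB
  have hq := hnum.fun_div hden (by positivity)
  have h := (hasDerivAt_arccos hlt.1.ne' hlt.2.ne).comp t hq
  refine h.congr_deriv ?_
  rw [hs, eA, eB, eC]
  have S0 := sqrt_pos.2 hS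
  generalize √(heron (A t) (B t) (C t)) = S at *
  generalize √(A t) = a at *
  generalize √(B t) = b at *
  generalize √(C t) = c at *
  rw [← eA, ← eB, ← eC]
  field_simp
  ring

/-- The weight of the edge joining the circles of radii `x` and `y` in a triangle of circles of
radii `x, y, z`. The inversive distances are `a` between `y` and `z`, `b` between `x` and `z`, and
`c` between `x` and `y`. Divided by the area factor `√heron`, twice this weight is the derivative
of the angle at `x` with respect to the logarithm of `y`. -/
noncomputable def wt (x y z a b c : ℝ) : ℝ :=
  x * y * (x * y * (1 - c ^ 2) + x * z * (a + b * c) + y * z * (b + a * c))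
    / (x ^ 2 + y ^ 2 + 2 * x * y * c)

/-- The angle variation of `hasDerivAt_angle_sq`, specialized to a variation of the logarithms of
the radii with velocities `X, Y, Z`. It only depends on the differences `Y - X` and `Z - X`, because
scaling all radii preserves the angles. -/
theorem angle_coeff {x y z a b c : ℝ} (hx : 0 < x) (hy : 0 < y) (hz : 0 < z) (hb : 0 ≤ b)
    (hc : 0 ≤ c) (X Y Z : ℝ) :
    2 * ((y ^ 2 + a * y * z) * Y + (z ^ 2 + a * y * z) * Z)
      - ((y ^ 2 + z ^ 2 + 2 * y * z * a) + (x ^ 2 + y ^ 2 + 2 * x * y * c)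
          - (x ^ 2 + z ^ 2 + 2 * x * z * b)) / (2 * (x ^ 2 + y ^ 2 + 2 * x * y * c))
        * (2 * ((x ^ 2 + c * x * y) * X + (y ^ 2 + c * x * y) * Y))
      - ((y ^ 2 + z ^ 2 + 2 * y * z * a) + (x ^ 2 + z ^ 2 + 2 * x * z * b)
          - (x ^ 2 + y ^ 2 + 2 * x * y * c)) / (2 * (x ^ 2 + z ^ 2 + 2 * x * z * b))
        * (2 * ((x ^ 2 + b * x * z) * X + (z ^ 2 + b * x * z) * Z))
    = 2 * (wt x y z a b c * (Y - X) + wt x z y a c b * (Z - X)) := by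
  have h3 : 0 < x ^ 2 + y ^ 2 + 2 * x * y * c := by positivity
  have h2 : 0 < x ^ 2 + z ^ 2 + 2 * x * z * b := by positivity
  unfold wt
  field_simp
  ring

theorem wt_comm (x y z a b c : ℝ) : wt y x z b a c = wt x y z a b c := by
  unfold wt; congr 1 <;> ring

/-- Sylvester's criterion for a binary quadratic form. -/
theorem pos_form {P R w X Y : ℝ} (hP : 0 < P) (hPR : w ^ 2 < P * R)
    (h : P * X ^ 2 + R * Y ^ 2 + 2 * w * X * Y ≤ 0) : X = 0 ∧ Y = 0 := by
  have h1 : (P * X + w * Y) ^ 2 + (P * R - w ^ 2) * Y ^ 2 ≤ 0 := by nlinarith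
  have h2 : (P * R - w ^ 2) * Y ^ 2 ≤ 0 := by nlinarith [sq_nonneg (P * X + w * Y)]
  have hY2 : Y ^ 2 ≤ 0 := by
    by_contra! hY
    have : 0 < (P * R - w ^ 2) * Y ^ 2 := mul_pos (by linarith) hY
    linarith
  have hY : Y = 0 := pow_eq_zero_iff (two_ne_zero) |>.1 (le_antisymm hY2 (sq_nonneg _))
  subst hY
  have : (P * X) ^ 2 ≤ 0 := by nlinarith
  have : P * X = 0 := pow_eq_zero_iff (two_ne_zero) |>.1 (le_antisymm this (sq_nonneg _))
  exact ⟨(mul_eq_zero.1 this).resolve_left hP.ne', rfl⟩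

/-- The weighted sum of squared differences over the edges of a nondegenerate triangle is positive
unless `X = Y = Z`, although a single weight may be negative. It is a binary form in `X - Y` and
`Y - Z` with determinant `u v + u w + v w`; `hdet` shows that this is positive, and `htr` that
`u A + v B + w C` is positive, which excludes a negative definite form. -/
theorem wt_form_pos {x y z a b c : ℝ} (hx : 0 < x) (hy : 0 < y) (hz : 0 < z) (ha : 0 ≤ a)
    (hb : 0 ≤ b) (hc : 0 ≤ c)
    (hS : 0 < heron (x ^ 2 + y ^ 2 + 2 * x * y * c) (x ^ 2 + z ^ 2 + 2 * x * z * b)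
      (y ^ 2 + z ^ 2 + 2 * y * z * a)) {X Y Z : ℝ}
    (h : wt x y z a b c * (X - Y) ^ 2 + wt x z y a c b * (X - Z) ^ 2
      + wt y z x b c a * (Y - Z) ^ 2 ≤ 0) : X = Y ∧ X = Z := by
  set A := x ^ 2 + y ^ 2 + 2 * x * y * c with hA
  set B := x ^ 2 + z ^ 2 + 2 * x * z * b with hB
  set C := y ^ 2 + z ^ 2 + 2 * y * z * a with hC
  have pA : 0 < A := by positivity
  have pB : 0 < B := by positivity
  have pC : 0 < C := by positivity
  set u := wt x y z a b c with hu
  set v := wt x z y a c b with hv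
  set w := wt y z x b c a with hw
  have eu : u * A = x * y * (x * y * (1 - c ^ 2) + x * z * (a + b * c) + y * z * (b + a * c)) :=
    div_mul_cancel₀ _ pA.ne'
  have ev : v * B = x * z * (x * z * (1 - b ^ 2) + x * y * (a + c * b) + z * y * (c + a * b)) :=
    div_mul_cancel₀ _ pB.ne'
  have ew : w * C = y * z * (y * z * (1 - a ^ 2) + y * x * (b + c * a) + z * x * (c + b * a)) :=
    div_mul_cancel₀ _ pC.ne'
  have htr : 4 * (u * A + v * B + w * C) = heron A B C := by
    rw [eu, ev, ew]; simp only [hA, hB, hC, heron]; ring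
  have hdet : 4 * ((u * v + u * w + v * w) * (A * B * C)) = heron A B C * (x * y * z *
      ((y + a * z) * (z + b * x) * (x + c * y) + (z + a * y) * (x + b * z) * (y + c * x))) := by
    have : (u * v + u * w + v * w) * (A * B * C)
        = (u * A) * (v * B) * C + (u * A) * (w * C) * B + (v * B) * (w * C) * A := by ring
    rw [this, eu, ev, ew]; simp only [hA, hB, hC, heron]; ring
  have hσ : 0 < u * v + u * w + v * w := by
    have h1 : 0 < 4 * ((u * v + u * w + v * w) * (A * B * C)) := by rw [hdet]; positivity
    exact pos_of_mul_pos_left (by linarith) (by positivity : 0 ≤ A * B * C)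
  have hT : 0 < u * A + v * B + w * C := by linarith
  -- `D` plays the role of the inner product of the two edge vectors with squared lengths `A, C`.
  set D := (B - A - C) / 2 with hD
  have hBD : B = A + C + 2 * D := by rw [hD]; ring
  have hAC : 0 < A * C - D ^ 2 := by
    have : heron A B C = 4 * (A * C - D ^ 2) := by rw [hBD]; unfold heron; ring
    linarith
  have hPR : v ^ 2 < (u + v) * (w + v) := by
    have : (u + v) * (w + v) = v ^ 2 + (u * v + u * w + v * w) := by ring
    linarith
  have hP : 0 < u + v := by
    have hid : (u + v) * A * (u * A + v * B + w * C) = ((u + v) * A + v * D) ^ 2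
        + ((u + v) * (w + v) - v ^ 2) * (A * C) + v ^ 2 * (A * C - D ^ 2) := by rw [hBD]; ring
    have hpos : 0 < (u + v) * (A * (u * A + v * B + w * C)) := by
      rw [← mul_assoc, hid]
      have : 0 < (u + v) * (w + v) - v ^ 2 := by linarith
      positivity
    exact pos_of_mul_pos_left hpos (by positivity)
  obtain ⟨h1, h2⟩ := pos_form (X := X - Y) (Y := Y - Z) hP hPR (by
    refine le_of_eq_of_le ?_ h
    ring)
  exact ⟨by linarith, by linarith⟩

/-! ### The curvature map and its Jacobian -/

/-- The square of the edge length `len I r i j` (where this is nonnegative). -/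
def lenSq (I : Finset (Fin N) → ℝ) (r : Fin N → ℝ) (i j : Fin N) : ℝ :=
  r i ^ 2 + r j ^ 2 + 2 * r i * r j * I {i, j}

theorem lenSq_comm (I : Finset (Fin N) → ℝ) (r : Fin N → ℝ) (i j : Fin N) :
    lenSq I r i j = lenSq I r j i := by
  unfold lenSq; rw [Finset.pair_comm]; ring

theorem len_eq (I : Finset (Fin N) → ℝ) (r : Fin N → ℝ) (i j : Fin N) :
    len I r i j = √(lenSq I r i j) := rfl

theorem len_comm (I : Finset (Fin N) → ℝ) (r : Fin N → ℝ) (i j : Fin N) :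
    len I r i j = len I r j i := by
  rw [len_eq, len_eq, lenSq_comm]

theorem face_rotate (i j k : Fin N) : ({j, k, i} : Finset (Fin N)) = {i, j, k} := by
  ext; simp; tauto

theorem face_swap (i j k : Fin N) : ({i, k, j} : Finset (Fin N)) = {i, j, k} := by
  ext; simp; tauto

theorem pair_mem_edges {Fc : Finset (Finset (Fin N))} (h3 : ∀ f ∈ Fc, f.card = 3) {i j k : Fin N}
    (hf : ({i, j, k} : Finset (Fin N)) ∈ Fc) : ({i, j} : Finset (Fin N)) ∈ edges Fc := by
  refine Finset.mem_biUnion.2 ⟨_, hf, Finset.mem_powersetCard.2 ⟨?_, ?_⟩⟩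
  · intro x; simp; tauto
  · rw [Finset.card_pair]
    rintro rfl
    have h := h3 _ hf
    have : ({i, i, k} : Finset (Fin N)).card ≤ 2 := by
      rw [Finset.insert_eq_of_mem (by simp)]; exact Finset.card_le_two
    omega

theorem exists_face_of_edge {Fc : Finset (Finset (Fin N))} (h3 : ∀ f ∈ Fc, f.card = 3)
    {i j : Fin N} (he : ({i, j} : Finset (Fin N)) ∈ edges Fc) :
    ∃ k, ({i, j, k} : Finset (Fin N)) ∈ Fc := by
  obtain ⟨f, hf, hef⟩ := Finset.mem_biUnion.1 he
  obtain ⟨hsub, hcard⟩ := Finset.mem_powersetCard.1 hef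
  have h1 : (f \ {i, j}).card = 1 := by
    rw [Finset.card_sdiff_of_subset hsub, h3 f hf, hcard]
  obtain ⟨k, hk⟩ := Finset.card_eq_one.1 h1
  refine ⟨k, ?_⟩
  have : ({i, j, k} : Finset (Fin N)) = f := by
    rw [← Finset.union_sdiff_of_subset hsub, hk]
    ext; simp
  rwa [this]

/-- The circles at `i, j, k` have positive radii and nonnegative mutual inversive distances, and
their centres span a nondegenerate triangle. -/
structure FaceFacts (I : Finset (Fin N) → ℝ) (r : Fin N → ℝ) (i j k : Fin N) : Prop where
  pi : 0 < r i
  pj : 0 < r j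
  pk : 0 < r k
  ij : 0 ≤ I {i, j}
  ik : 0 ≤ I {i, k}
  jk : 0 ≤ I {j, k}
  heron_pos : 0 < heron (lenSq I r i j) (lenSq I r i k) (lenSq I r j k)

theorem FaceFacts.lenSq_pos {I : Finset (Fin N) → ℝ} {r : Fin N → ℝ} {i j k : Fin N}
    (h : FaceFacts I r i j k) :
    0 < lenSq I r i j ∧ 0 < lenSq I r i k ∧ 0 < lenSq I r j k := by
  have := h.pi; have := h.pj; have := h.pk; have := h.ij; have := h.ik; have := h.jk
  unfold lenSq
  refine ⟨?_, ?_, ?_⟩ <;> positivity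

theorem FaceFacts.len_pos {I : Finset (Fin N) → ℝ} {r : Fin N → ℝ} {i j k : Fin N}
    (h : FaceFacts I r i j k) : 0 < len I r i j ∧ 0 < len I r i k ∧ 0 < len I r j k :=
  ⟨sqrt_pos.2 h.lenSq_pos.1, sqrt_pos.2 h.lenSq_pos.2.1, sqrt_pos.2 h.lenSq_pos.2.2⟩

theorem FaceFacts.heron_len {I : Finset (Fin N) → ℝ} {r : Fin N → ℝ} {i j k : Fin N}
    (h : FaceFacts I r i j k) :
    0 < heron (len I r i j ^ 2) (len I r i k ^ 2) (len I r j k ^ 2) := by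
  simp only [len_eq]
  rw [Real.sq_sqrt h.lenSq_pos.1.le, Real.sq_sqrt h.lenSq_pos.2.1.le,
    Real.sq_sqrt h.lenSq_pos.2.2.le]
  exact h.heron_pos

theorem faceFacts {Fc : Finset (Finset (Fin N))} (h3 : ∀ f ∈ Fc, f.card = 3)
    {I : Finset (Fin N) → ℝ} (hI : ∀ e ∈ edges Fc, 0 ≤ I e) {r : Fin N → ℝ}
    (hr : r ∈ Omega Fc I) {i j k : Fin N} (hf : ({i, j, k} : Finset (Fin N)) ∈ Fc) :
    FaceFacts I r i j k := by
  have hik : ({i, k, j} : Finset (Fin N)) ∈ Fc := by rwa [face_swap]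
  have hjk : ({j, k, i} : Finset (Fin N)) ∈ Fc := by rwa [face_rotate]
  have hki : ({k, i, j} : Finset (Fin N)) ∈ Fc := by rwa [face_rotate, face_rotate]
  have p := hr.1
  have Iij := hI _ (pair_mem_edges h3 hf)
  have Iik := hI _ (pair_mem_edges h3 hik)
  have Ijk := hI _ (pair_mem_edges h3 hjk)
  refine ⟨p i, p j, p k, Iij, Iik, Ijk, ?_⟩
  have t1 := hr.2 i j k hf
  have t2 := hr.2 j k i hjk
  have t3 := hr.2 k i j hki
  rw [len_comm I r k i, len_comm I r j i] at *
  rw [len_comm I r k j] at *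
  have h := heron_sq_pos (a := len I r i j) (b := len I r i k) (c := len I r j k)
    (by linarith) (by linarith) (by linarith)
  have := p i; have := p j; have := p k
  have q1 : 0 ≤ lenSq I r i j := by unfold lenSq; positivity
  have q2 : 0 ≤ lenSq I r i k := by unfold lenSq; positivity
  have q3 : 0 ≤ lenSq I r j k := by unfold lenSq; positivity
  simp only [len_eq] at h
  rwa [Real.sq_sqrt q1, Real.sq_sqrt q2, Real.sq_sqrt q3] at h

theorem isOpen_Omega (Fc : Finset (Finset (Fin N))) (I : Finset (Fin N) → ℝ) :
    IsOpen (Omega Fc I) := by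
  have hlen : ∀ i j, Continuous fun r : Fin N → ℝ => len I r i j := fun i j => by
    unfold len; fun_prop
  have : Omega Fc I = (⋂ i, {r | 0 < r i}) ∩ ⋂ i, ⋂ j, ⋂ k,
      {r | ({i, j, k} : Finset (Fin N)) ∈ Fc → len I r j k < len I r i j + len I r i k} := by
    ext r; simp [Omega]
  rw [this]
  refine (isOpen_iInter_of_finite fun i => isOpen_lt continuous_const (continuous_apply i)).inter
    (isOpen_iInter_of_finite fun i => isOpen_iInter_of_finite fun j =>
      isOpen_iInter_of_finite fun k => ?_)
  by_cases h : ({i, j, k} : Finset (Fin N)) ∈ Fc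
  · simpa [h] using isOpen_lt (hlen j k) ((hlen i j).add (hlen i k))
  · simp [h]

theorem contDiff_rOf : ContDiff ℝ 1 (rOf : (Fin N → ℝ) → Fin N → ℝ) := by
  unfold rOf
  exact contDiff_pi.2 fun i => (contDiff_apply ℝ ℝ i).exp

theorem rOf_log {r : Fin N → ℝ} (hr : ∀ i, 0 < r i) : rOf (fun i => Real.log (r i)) = r :=
  funext fun i => Real.exp_log (hr i)

theorem contDiffAt_angle {I : Finset (Fin N) → ℝ} {u : Fin N → ℝ} {i j k : Fin N}
    (h : FaceFacts I (rOf u) i j k) :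
    ContDiffAt ℝ 1 (fun v => arccos (cosAng I (rOf v) i j k)) u := by
  have hR : ∀ m, ContDiffAt ℝ 1 (fun v : Fin N → ℝ => rOf v m) u := fun m =>
    (contDiff_pi.1 contDiff_rOf m).contDiffAt
  have hlen : ∀ m n, 0 < lenSq I (rOf u) m n → ContDiffAt ℝ 1 (fun v => len I (rOf v) m n) u := by
    intro m n hmn
    unfold len
    refine ContDiffAt.sqrt ?_ hmn.ne'
    exact (((hR m).pow 2).add ((hR n).pow 2)).add
      (((contDiffAt_const.mul (hR m)).mul (hR n)).mul contDiffAt_const)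
  have hlt := abs_cos_lt_one h.len_pos.1 h.len_pos.2.1 h.heron_len
  have l1 := hlen i j h.lenSq_pos.1
  have l2 := hlen i k h.lenSq_pos.2.1
  have l3 := hlen j k h.lenSq_pos.2.2
  have hpos : 0 < 2 * len I (rOf u) i j * len I (rOf u) i k := by
    have := h.len_pos.1; have := h.len_pos.2.1; positivity
  have hcos : ContDiffAt ℝ 1 (fun v => cosAng I (rOf v) i j k) u := by
    unfold cosAng
    exact (((l1.pow 2).add (l2.pow 2)).sub (l3.pow 2)).div
      ((contDiffAt_const.mul l1).mul l2) hpos.ne'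
  exact ContDiffAt.comp (g := arccos) u (contDiffAt_arccos hlt.1.ne' hlt.2.ne) hcos

theorem contDiffAt_K {Fc : Finset (Finset (Fin N))} (h3 : ∀ f ∈ Fc, f.card = 3)
    {I : Finset (Fin N) → ℝ} (hI : ∀ e ∈ edges Fc, 0 ≤ I e) {u : Fin N → ℝ}
    (hu : rOf u ∈ Omega Fc I) (i : Fin N) : ContDiffAt ℝ 1 (fun v => K Fc I (rOf v) i) u := by
  unfold K
  refine contDiffAt_const.sub (contDiffAt_const.mul ?_)
  refine ContDiffAt.sum fun j _ => ContDiffAt.sum fun k _ => ?_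
  split_ifs with hf
  · exact contDiffAt_angle (faceFacts h3 hI hu hf)
  · exact contDiffAt_const

/-- The weight of the edge `{i, j}` in the face `{i, j, k}`. -/
noncomputable def edgeWt (I : Finset (Fin N) → ℝ) (r : Fin N → ℝ) (i j k : Fin N) : ℝ :=
  wt (r i) (r j) (r k) (I {j, k}) (I {i, k}) (I {i, j})

theorem edgeWt_comm (I : Finset (Fin N) → ℝ) (r : Fin N → ℝ) (i j k : Fin N) :
    edgeWt I r j i k = edgeWt I r i j k := by
  unfold edgeWt; rw [Finset.pair_comm j i]; exact wt_comm ..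

/-- Four times the area of the triangle `{i, j, k}`. -/
noncomputable def fourArea (I : Finset (Fin N) → ℝ) (r : Fin N → ℝ) (i j k : Fin N) : ℝ :=
  √(heron (lenSq I r i j) (lenSq I r i k) (lenSq I r j k))

theorem fourArea_rotate (I : Finset (Fin N) → ℝ) (r : Fin N → ℝ) (i j k : Fin N) :
    fourArea I r j k i = fourArea I r i j k := by
  unfold fourArea
  rw [lenSq_comm I r j i, lenSq_comm I r k i]
  congr 1; unfold heron; ring

/-- The derivative of the angle at `i` in the face `{i, j, k}` along the direction `X` of
logarithmic radii. -/
noncomputable def dAngle (I : Finset (Fin N) → ℝ) (r X : Fin N → ℝ) (i j k : Fin N) : ℝ :=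
  (fourArea I r i j k)⁻¹
    * (2 * (edgeWt I r i j k * (X j - X i) + edgeWt I r i k j * (X k - X i)))

theorem hasDerivAt_angle {I : Finset (Fin N) → ℝ} {u : Fin N → ℝ} {i j k : Fin N}
    (h : FaceFacts I (rOf u) i j k) (X : Fin N → ℝ) :
    HasDerivAt (fun t : ℝ => arccos (cosAng I (rOf (u + t • X)) i j k))
      (dAngle I (rOf u) X i j k) 0 := by
  have hR : ∀ m, HasDerivAt (fun t : ℝ => rOf (u + t • X) m) (rOf u m * X m) 0 := by
    intro m
    have : HasDerivAt (fun t : ℝ => u m + t * X m) (X m) 0 := by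
      simpa using ((hasDerivAt_id (0 : ℝ)).mul_const (X m)).const_add (u m)
    simpa [rOf] using this.exp
  have h0 : rOf (u + (0 : ℝ) • X) = rOf u := by simp
  have hQ : ∀ m n, HasDerivAt (fun t : ℝ => lenSq I (rOf (u + t • X)) m n)
      (2 * ((rOf u m ^ 2 + I {m, n} * rOf u m * rOf u n) * X m
        + (rOf u n ^ 2 + I {m, n} * rOf u m * rOf u n) * X n)) 0 := by
    intro m n
    have := (((hR m).fun_pow 2).fun_add ((hR n).fun_pow 2)).fun_add
      ((((hR m).const_mul 2).fun_mul (hR n)).mul_const (I {m, n}))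
    refine this.congr_deriv ?_
    simp only [h0]
    push_cast
    ring
  have hp := h.lenSq_pos
  have key := hasDerivAt_angle_sq (hQ i j) (hQ i k) (hQ j k) (by rw [h0]; exact hp.1)
    (by rw [h0]; exact hp.2.1) (by rw [h0]; exact hp.2.2) (by rw [h0]; exact h.heron_pos)
  refine key.congr_deriv ?_
  rw [h0]
  unfold dAngle fourArea edgeWt
  rw [Finset.pair_comm k j, ← angle_coeff h.pi h.pj h.pk h.ik h.ij]
  simp only [lenSq]

/-- Minus the contribution of the face `{i, j, k}` to the bilinear form of the angle Jacobian:
a weighted sum of products of differences along the three edges. -/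
noncomputable def faceForm (I : Finset (Fin N) → ℝ) (r X Y : Fin N → ℝ) (i j k : Fin N) : ℝ :=
  (fourArea I r i j k)⁻¹ * (2 * (edgeWt I r i j k * ((X i - X j) * (Y i - Y j))
    + edgeWt I r i k j * ((X i - X k) * (Y i - Y k))
    + edgeWt I r j k i * ((X j - X k) * (Y j - Y k))))

theorem dAngle_cyclic (I : Finset (Fin N) → ℝ) (r X Y : Fin N → ℝ) (i j k : Fin N) :
    Y i * dAngle I r X i j k + Y j * dAngle I r X j k i + Y k * dAngle I r X k i j
      = -faceForm I r X Y i j k := by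
  unfold dAngle faceForm
  rw [fourArea_rotate I r j k i, fourArea_rotate I r i j k, edgeWt_comm I r i j k,
    edgeWt_comm I r i k j, edgeWt_comm I r j k i]
  ring

theorem faceForm_comm (I : Finset (Fin N) → ℝ) (r X Y : Fin N → ℝ) (i j k : Fin N) :
    faceForm I r X Y i j k = faceForm I r Y X i j k := by
  unfold faceForm; ring

theorem FaceFacts.eq_of_faceForm_nonpos {I : Finset (Fin N) → ℝ} {r : Fin N → ℝ} {i j k : Fin N}
    (h : FaceFacts I r i j k) {X : Fin N → ℝ} (hX : faceForm I r X X i j k ≤ 0) :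
    X i = X j ∧ X i = X k := by
  have hS : 0 < fourArea I r i j k := sqrt_pos.2 h.heron_pos
  have h2 := nonpos_of_mul_nonpos_right hX (inv_pos.2 hS)
  have hh := h.heron_pos
  unfold lenSq at hh
  refine wt_form_pos h.pi h.pj h.pk h.jk h.ik h.ij hh ?_
  unfold edgeWt at h2
  rw [Finset.pair_comm k j, Finset.pair_comm j i, Finset.pair_comm k i] at h2
  linarith

theorem FaceFacts.faceForm_nonneg {I : Finset (Fin N) → ℝ} {r : Fin N → ℝ} {i j k : Fin N}
    (h : FaceFacts I r i j k) (X : Fin N → ℝ) : 0 ≤ faceForm I r X X i j k := by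
  by_contra! hX
  obtain ⟨h1, h2⟩ := h.eq_of_faceForm_nonpos hX.le
  have : faceForm I r X X i j k = 0 := by
    unfold faceForm; rw [← h1, ← h2]; ring
  linarith

theorem sum_rotate (f : Fin N → Fin N → Fin N → ℝ) :
    ∑ i, ∑ j, ∑ k, f j k i = ∑ i, ∑ j, ∑ k, f i j k := by
  rw [Finset.sum_comm]
  exact Finset.sum_congr rfl fun j _ => Finset.sum_comm

theorem sum_cyclic (f : Fin N → Fin N → Fin N → ℝ) :
    ∑ i, ∑ j, ∑ k, f i j k
      = (1 / 3) * ∑ i, ∑ j, ∑ k, (f i j k + f j k i + f k i j) := by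
  simp only [Finset.sum_add_distrib]
  have h1 := sum_rotate f
  have h2 := sum_rotate fun i j k => f j k i
  rw [h2, h1]; ring

/-- The derivative of the curvature at `i` along the direction `X` of logarithmic radii. -/
noncomputable def dK (Fc : Finset (Finset (Fin N))) (I : Finset (Fin N) → ℝ) (r X : Fin N → ℝ)
    (i : Fin N) : ℝ :=
  -((1 / 2) * ∑ j, ∑ k, if ({i, j, k} : Finset (Fin N)) ∈ Fc then dAngle I r X i j k else 0)

theorem hasDerivAt_K {Fc : Finset (Finset (Fin N))} (h3 : ∀ f ∈ Fc, f.card = 3)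
    {I : Finset (Fin N) → ℝ} (hI : ∀ e ∈ edges Fc, 0 ≤ I e) {u : Fin N → ℝ}
    (hu : rOf u ∈ Omega Fc I) (X : Fin N → ℝ) (i : Fin N) :
    HasDerivAt (fun t : ℝ => K Fc I (rOf (u + t • X)) i) (dK Fc I (rOf u) X i) 0 := by
  unfold K dK
  refine HasDerivAt.const_sub _ (HasDerivAt.const_mul _ ?_)
  refine HasDerivAt.fun_sum fun j _ => HasDerivAt.fun_sum fun k _ => ?_
  split_ifs with hf
  · exact hasDerivAt_angle (faceFacts h3 hI hu hf) X
  · exact hasDerivAt_const _ _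

/-- The bilinear form `⟨Y, L(r) X⟩` of the curvature Jacobian. Each face occurs once for every
ordering of its vertices, hence the factor `1 / 6`. -/
noncomputable def curvForm (Fc : Finset (Finset (Fin N))) (I : Finset (Fin N) → ℝ)
    (r X Y : Fin N → ℝ) : ℝ :=
  (1 / 6) * ∑ i, ∑ j, ∑ k,
    if ({i, j, k} : Finset (Fin N)) ∈ Fc then faceForm I r X Y i j k else 0

/-- Grouping the angle derivatives of each face turns `⟨Y, L(r) X⟩` into a sum of face forms. -/
theorem sum_mul_dK (Fc : Finset (Finset (Fin N))) (I : Finset (Fin N) → ℝ)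
    (r X Y : Fin N → ℝ) : ∑ i, Y i * dK Fc I r X i = curvForm Fc I r X Y := by
  have h1 : ∑ i, Y i * dK Fc I r X i = -(1 / 2) * ∑ i, ∑ j, ∑ k,
      (if ({i, j, k} : Finset (Fin N)) ∈ Fc then Y i * dAngle I r X i j k else 0) := by
    rw [Finset.mul_sum]
    refine Finset.sum_congr rfl fun i _ => ?_
    simp only [dK, ← mul_ite_zero, ← Finset.mul_sum]
    ring
  rw [h1, sum_cyclic, curvForm]
  have h2 : ∀ i j k : Fin N,
      (if ({i, j, k} : Finset (Fin N)) ∈ Fc then Y i * dAngle I r X i j k else 0)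
      + (if ({j, k, i} : Finset (Fin N)) ∈ Fc then Y j * dAngle I r X j k i else 0)
      + (if ({k, i, j} : Finset (Fin N)) ∈ Fc then Y k * dAngle I r X k i j else 0)
      = -(if ({i, j, k} : Finset (Fin N)) ∈ Fc then faceForm I r X Y i j k else 0) := by
    intro i j k
    rw [face_rotate j k i, face_rotate i j k]
    split_ifs
    · exact dAngle_cyclic I r X Y i j k
    · simp
  simp only [h2, Finset.sum_neg_distrib]
  ring

theorem curvForm_comm (Fc : Finset (Finset (Fin N))) (I : Finset (Fin N) → ℝ)
    (r X Y : Fin N → ℝ) : curvForm Fc I r X Y = curvForm Fc I r Y X := by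
  unfold curvForm
  simp only [faceForm_comm I r X Y]

theorem curvForm_sub_const (Fc : Finset (Finset (Fin N))) (I : Finset (Fin N) → ℝ)
    (r X : Fin N → ℝ) (m : ℝ) :
    curvForm Fc I r (fun i => X i - m) (fun i => X i - m) = curvForm Fc I r X X := by
  simp only [curvForm, faceForm, sub_sub_sub_cancel_right]

theorem curvForm_nonneg {Fc : Finset (Finset (Fin N))} (h3 : ∀ f ∈ Fc, f.card = 3)
    {I : Finset (Fin N) → ℝ} (hI : ∀ e ∈ edges Fc, 0 ≤ I e) {r : Fin N → ℝ}
    (hr : r ∈ Omega Fc I) (X : Fin N → ℝ) : 0 ≤ curvForm Fc I r X X := by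
  refine mul_nonneg (by norm_num) (Finset.sum_nonneg fun i _ => Finset.sum_nonneg fun j _ =>
    Finset.sum_nonneg fun k _ => ?_)
  split_ifs with hf
  · exact (faceFacts h3 hI hr hf).faceForm_nonneg X
  · exact le_rfl

/-- The kernel of the curvature Jacobian consists of constant vectors: definiteness modulo
constants on every face spreads along the connected 1-skeleton. -/
theorem eq_of_curvForm_eq_zero {Fc : Finset (Finset (Fin N))} (hT : IsTriangulation Fc)
    {I : Finset (Fin N) → ℝ} (hI : ∀ e ∈ edges Fc, 0 ≤ I e) {r : Fin N → ℝ}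
    (hr : r ∈ Omega Fc I) {X : Fin N → ℝ} (hX : curvForm Fc I r X X = 0) (a b : Fin N) :
    X a = X b := by
  have hnn : ∀ i j k : Fin N,
      0 ≤ if ({i, j, k} : Finset (Fin N)) ∈ Fc then faceForm I r X X i j k else 0 := by
    intro i j k
    split_ifs with hf
    · exact (faceFacts hT.card3 hI hr hf).faceForm_nonneg X
    · exact le_rfl
  have hsum : ∑ i, ∑ j, ∑ k,
      (if ({i, j, k} : Finset (Fin N)) ∈ Fc then faceForm I r X X i j k else 0) = 0 := by
    unfold curvForm at hX; linarith
  have hface : ∀ i j k : Fin N, ({i, j, k} : Finset (Fin N)) ∈ Fc → X i = X j := by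
    intro i j k hf
    have h1 := (Finset.sum_eq_zero_iff_of_nonneg fun i _ => Finset.sum_nonneg fun j _ =>
      Finset.sum_nonneg fun k _ => hnn i j k).1 hsum i (Finset.mem_univ i)
    have h2 := (Finset.sum_eq_zero_iff_of_nonneg fun j _ => Finset.sum_nonneg fun k _ =>
      hnn i j k).1 h1 j (Finset.mem_univ j)
    have h4 := (Finset.sum_eq_zero_iff_of_nonneg fun k _ => hnn i j k).1 h2 k (Finset.mem_univ k)
    rw [if_pos hf] at h4
    exact ((faceFacts hT.card3 hI hr hf).eq_of_faceForm_nonpos h4.le).1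
  obtain ⟨p⟩ := hT.conn.preconnected a b
  induction p with
  | nil => rfl
  | cons hadj _ ih =>
    refine Eq.trans ?_ ih
    rcases ((SimpleGraph.fromRel_adj _ _ _).1 hadj).2 with he | he
    · obtain ⟨k, hk⟩ := exists_face_of_edge hT.card3 he
      exact hface _ _ k hk
    · obtain ⟨k, hk⟩ := exists_face_of_edge hT.card3 he
      exact (hface _ _ k hk).symm

/-- A combinatorial Gauss–Bonnet formula: the total curvature is the same for all metrics in `Ω`. -/
theorem sum_K_eq {Fc : Finset (Finset (Fin N))} (h3 : ∀ f ∈ Fc, f.card = 3)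
    {I : Finset (Fin N) → ℝ} (hI : ∀ e ∈ edges Fc, 0 ≤ I e) {r : Fin N → ℝ}
    (hr : r ∈ Omega Fc I) : ∑ i, K Fc I r i = ∑ _i : Fin N, 2 * π - (1 / 6) * ∑ i : Fin N,
      ∑ j : Fin N, ∑ k : Fin N, (if ({i, j, k} : Finset (Fin N)) ∈ Fc then π else 0) := by
  have h2 : ∀ i j k : Fin N,
      (if ({i, j, k} : Finset (Fin N)) ∈ Fc then arccos (cosAng I r i j k) else 0)
      + (if ({j, k, i} : Finset (Fin N)) ∈ Fc then arccos (cosAng I r j k i) else 0)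
      + (if ({k, i, j} : Finset (Fin N)) ∈ Fc then arccos (cosAng I r k i j) else 0)
      = if ({i, j, k} : Finset (Fin N)) ∈ Fc then π else 0 := by
    intro i j k
    rw [face_rotate j k i, face_rotate i j k]
    split_ifs with hf
    · have h := faceFacts h3 hI hr hf
      have := angle_sum h.len_pos.1 h.len_pos.2.1 h.len_pos.2.2 h.heron_len
      rw [← this]
      unfold cosAng
      rw [len_comm I r j i, len_comm I r k i, len_comm I r k j]
    · simp
  have h4 := sum_cyclic fun i j k =>
    if ({i, j, k} : Finset (Fin N)) ∈ Fc then arccos (cosAng I r i j k) else 0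
  simp only [h2] at h4
  unfold K
  rw [Finset.sum_sub_distrib]
  congr 1
  rw [← Finset.mul_sum, h4]
  ring

/-! ### Linearization of the flow and convergence -/

/-- The right-hand side of the α-flow, as a vector field in the coordinates `u = ln r`. -/
noncomputable def flowField (Fc : Finset (Finset (Fin N))) (I : Finset (Fin N) → ℝ) (α : ℝ)
    (u : Fin N → ℝ) (i : Fin N) : ℝ :=
  sA Fc α (rOf u) * rOf u i ^ α - K Fc I (rOf u) i

theorem sum_rpow_pos [Nonempty (Fin N)] (α : ℝ) {r : Fin N → ℝ} (hr : ∀ i, 0 < r i) :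
    0 < ∑ j, r j ^ α :=
  Finset.sum_pos (fun j _ => rpow_pos_of_pos (hr j) α) Finset.univ_nonempty

theorem contDiffAt_flowField [Nonempty (Fin N)] {Fc : Finset (Finset (Fin N))}
    (h3 : ∀ f ∈ Fc, f.card = 3)
    {I : Finset (Fin N) → ℝ} (hI : ∀ e ∈ edges Fc, 0 ≤ I e) (α : ℝ) {u : Fin N → ℝ}
    (hu : rOf u ∈ Omega Fc I) : ContDiffAt ℝ 1 (flowField Fc I α) u := by
  refine contDiffAt_pi.2 fun i => ?_
  have hpow : ∀ j, ContDiffAt ℝ 1 (fun v : Fin N → ℝ => rOf v j ^ α) u := fun j =>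
    (contDiff_pi.1 contDiff_rOf j).contDiffAt.rpow_const_of_ne (exp_pos _).ne'
  unfold flowField sA
  exact ((contDiffAt_const.div (ContDiffAt.sum fun j _ => hpow j)
    (sum_rpow_pos α hu.1).ne').mul (hpow i)).sub (contDiffAt_K h3 hI hu i)

/-- The α-flow preserves the product of the radii. The total curvature is identified with `2πχ` by
means of the given constant α-curvature metric `r`. -/
theorem sum_flowField_eq_zero [Nonempty (Fin N)] {Fc : Finset (Finset (Fin N))}
    (h3 : ∀ f ∈ Fc, f.card = 3)
    {I : Finset (Fin N) → ℝ} (hI : ∀ e ∈ edges Fc, 0 ≤ I e) {α : ℝ} {r : Fin N → ℝ}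
    (hr : r ∈ Omega Fc I) (hconst : ∀ i, K Fc I r i = sA Fc α r * r i ^ α) {u : Fin N → ℝ}
    (hu : rOf u ∈ Omega Fc I) : ∑ i, flowField Fc I α u i = 0 := by
  have htot : ∀ r' : Fin N → ℝ, r' ∈ Omega Fc I →
      ∑ i, sA Fc α r' * r' i ^ α = 2 * π * (chi Fc : ℝ) := fun r' hr' => by
    rw [← Finset.mul_sum, sA, div_mul_cancel₀ _ (sum_rpow_pos α hr'.1).ne']
  unfold flowField
  rw [Finset.sum_sub_distrib, htot _ hu, sum_K_eq h3 hI hu, ← sum_K_eq h3 hI hr,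
    Finset.sum_congr rfl fun i _ => hconst i, htot _ hr, sub_self]

theorem hasDerivAt_flowField [Nonempty (Fin N)] {Fc : Finset (Finset (Fin N))}
    (h3 : ∀ f ∈ Fc, f.card = 3)
    {I : Finset (Fin N) → ℝ} (hI : ∀ e ∈ edges Fc, 0 ≤ I e) (α : ℝ) {u : Fin N → ℝ}
    (hu : rOf u ∈ Omega Fc I) (X : Fin N → ℝ) (i : Fin N) :
    HasDerivAt (fun t : ℝ => flowField Fc I α (u + t • X) i)
      (α * sA Fc α (rOf u) * (rOf u i ^ α * (X i - (∑ j, rOf u j ^ α * X j) / ∑ j, rOf u j ^ α))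
        - dK Fc I (rOf u) X i) 0 := by
  have hpow : ∀ j, HasDerivAt (fun t : ℝ => rOf (u + t • X) j ^ α) (α * (rOf u j ^ α * X j)) 0 := by
    intro j
    have h1 : HasDerivAt (fun t : ℝ => u j + t * X j) (X j) 0 := by
      simpa using ((hasDerivAt_id (0 : ℝ)).mul_const (X j)).const_add (u j)
    have h2 : HasDerivAt (fun t : ℝ => exp (α * (u j + t * X j))) _ 0 := (h1.const_mul α).exp
    have hE : ∀ x : ℝ, exp x ^ α = exp (α * x) := fun x => by
      rw [mul_comm, exp_mul]
    simp only [rOf, hE]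
    refine h2.congr_deriv ?_
    simp only [zero_mul, add_zero]
    ring
  have h0 : rOf (u + (0 : ℝ) • X) = rOf u := by simp
  have hP := (sum_rpow_pos α hu.1).ne'
  have hS : HasDerivAt (fun t : ℝ => ∑ j, rOf (u + t • X) j ^ α)
      (∑ j, α * (rOf u j ^ α * X j)) 0 := HasDerivAt.fun_sum fun j _ => hpow j
  have hs := ((hasDerivAt_const (0 : ℝ) (2 * π * (chi Fc : ℝ))).fun_div hS
    (by rw [h0]; exact hP)).fun_mul (hpow i)
  refine (hs.fun_sub (hasDerivAt_K h3 hI hu X i)).congr_deriv ?_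
  simp only [h0, sA, ← Finset.mul_sum]
  field_simp
  ring

theorem deriv_K_update {Fc : Finset (Finset (Fin N))} (h3 : ∀ f ∈ Fc, f.card = 3)
    {I : Finset (Fin N) → ℝ} (hI : ∀ e ∈ edges Fc, 0 ≤ I e) {u : Fin N → ℝ}
    (hu : rOf u ∈ Omega Fc I) (i j : Fin N) :
    deriv (fun s : ℝ => K Fc I (rOf (Function.update u j s)) i) (u j)
      = dK Fc I (rOf u) (Pi.single j 1) i := by
  have h := hasDerivAt_K h3 hI hu (Pi.single j 1) i
  have h2 : HasDerivAt (fun s : ℝ => s - u j) 1 (u j) := (hasDerivAt_id _).sub_const _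
  have h4 := HasDerivAt.comp (u j) (by rw [sub_self]; exact h) h2
  rw [mul_one] at h4
  refine Eq.trans (congrArg (fun f => deriv f (u j)) ?_) h4.deriv
  funext s
  simp only [Function.comp]
  congr 2
  funext m
  by_cases hm : m = j
  · subst hm; simp
  · simp [hm]

/-- The directional derivatives of the curvature are the action of the Jacobian matrix. -/
theorem dK_eq_sum (Fc : Finset (Finset (Fin N))) (I : Finset (Fin N) → ℝ)
    (r X : Fin N → ℝ) (i : Fin N) :
    dK Fc I r X i = ∑ j, dK Fc I r (Pi.single j 1) i * X j := by
  have h : ∀ Z : Fin N → ℝ, dK Fc I r Z i = curvForm Fc I r Z (Pi.single i 1) := fun Z => by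
    rw [← sum_mul_dK]; simp [Pi.single_apply]
  have h' : ∀ j, dK Fc I r (Pi.single j 1) i = dK Fc I r (Pi.single i 1) j := fun j => by
    rw [h, curvForm_comm, ← sum_mul_dK]; simp [Pi.single_apply]
  rw [h, curvForm_comm, ← sum_mul_dK]
  exact Finset.sum_congr rfl fun j _ => by rw [h', mul_comm]

/-- The spectral assumption on `Λ_α` in terms of logarithmic radii, through the substitution
`y_i = r_i^{α/2} Z_i`. -/
theorem curvForm_gap {Fc : Finset (Finset (Fin N))} (hT : IsTriangulation Fc)
    {I : Finset (Fin N) → ℝ} (hI : ∀ e ∈ edges Fc, 0 ≤ I e) {α κ : ℝ}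
    {r : Fin N → ℝ} (hr : r ∈ Omega Fc I) {L : Matrix (Fin N) (Fin N) ℝ}
    (hL : ∀ i j, L i j = dK Fc I r (Pi.single j 1) i)
    (hEig : ∀ lam : ℝ, 0 < lam →
      (∃ v : Fin N → ℝ, v ≠ 0 ∧
        (Matrix.of fun i j => r i ^ (-(α / 2)) * L i j * r j ^ (-(α / 2))).mulVec v
          = lam • v) → κ < lam)
    {Z : Fin N → ℝ} (hZ : Z ≠ 0) (hZw : ∑ i, r i ^ α * Z i = 0) :
    κ * ∑ i, r i ^ α * Z i ^ 2 < curvForm Fc I r Z Z := by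
  set M : Matrix (Fin N) (Fin N) ℝ :=
    Matrix.of fun i j => r i ^ (-(α / 2)) * L i j * r j ^ (-(α / 2)) with hM
  set w : Fin N → ℝ := fun i => r i ^ (α / 2) with hw
  have hwpos : ∀ i, 0 < w i := fun i => rpow_pos_of_pos (hr.1 i) _
  have hinv : ∀ i, r i ^ (-(α / 2)) = (w i)⁻¹ := fun i => rpow_neg (hr.1 i).le _
  have hww : ∀ i, r i ^ α = w i * w i := fun i => by
    rw [hw, ← rpow_add (hr.1 i)]; congr 1; ring
  have hLsymm : ∀ i j, L i j = L j i := fun i j => by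
    have h : ∀ a b : Fin N, L a b = curvForm Fc I r (Pi.single b 1) (Pi.single a 1) := fun a b => by
      rw [hL, ← sum_mul_dK]; simp [Pi.single_apply]
    rw [h, h, curvForm_comm]
  have hform : ∀ y : Fin N → ℝ, y ⬝ᵥ M.mulVec y
      = curvForm Fc I r (fun i => (w i)⁻¹ * y i) (fun i => (w i)⁻¹ * y i) := by
    intro y
    rw [← sum_mul_dK]
    refine Finset.sum_congr rfl fun i _ => ?_
    rw [dK_eq_sum, Matrix.mulVec, dotProduct, Finset.mul_sum, Finset.mul_sum]
    refine Finset.sum_congr rfl fun j _ => ?_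
    rw [hM, Matrix.of_apply, hinv, hinv, hL]
    ring
  have hHerm : M.IsHermitian := by
    ext i j
    simp only [Matrix.conjTranspose_apply, star_trivial, hM, Matrix.of_apply]
    rw [hLsymm]; ring
  have hy : (fun i => w i * Z i) ≠ 0 := by
    obtain ⟨j, hj⟩ := Function.ne_iff.1 hZ
    exact Function.ne_iff.2 ⟨j, mul_ne_zero (hwpos j).ne' hj⟩
  have := spectral_gap hHerm (fun y => by rw [hform]; exact curvForm_nonneg hT.card3 hI hr _)
    (w := w) (fun y hy => ?_) hEig hy (by
      rw [← hZw]
      exact Finset.sum_congr rfl fun i _ => by simp only [hww]; ring)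
  · rw [hform] at this
    have h1 : (fun i => (w i)⁻¹ * (w i * Z i)) = Z := funext fun i =>
      inv_mul_cancel_left₀ (hwpos i).ne' _
    rw [h1] at this
    refine lt_of_eq_of_lt ?_ this
    congr 1
    exact Finset.sum_congr rfl fun i _ => by simp only [hww]; ring
  · rw [hform] at hy
    obtain ⟨a⟩ := hT.conn.nonempty
    refine ⟨(w a)⁻¹ * y a, funext fun i => ?_⟩
    have := eq_of_curvForm_eq_zero hT hI hr hy i a
    rw [Pi.smul_apply, smul_eq_mul, ← this, mul_comm, mul_inv_cancel_left₀ (hwpos i).ne']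

/-- The linearization of the α-flow at a constant α-curvature metric is negative on nonzero
vectors of sum zero. -/
theorem linearization_neg {Fc : Finset (Finset (Fin N))} (hT : IsTriangulation Fc)
    {I : Finset (Fin N) → ℝ} (hI : ∀ e ∈ edges Fc, 0 ≤ I e) {α : ℝ}
    {r : Fin N → ℝ} (hr : r ∈ Omega Fc I) {L : Matrix (Fin N) (Fin N) ℝ}
    (hL : ∀ i j, L i j = dK Fc I r (Pi.single j 1) i)
    (hEig : ∀ lam : ℝ, 0 < lam →
      (∃ v : Fin N → ℝ, v ≠ 0 ∧
        (Matrix.of fun i j => r i ^ (-(α / 2)) * L i j * r j ^ (-(α / 2))).mulVec v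
          = lam • v) → α * sA Fc α r < lam)
    {X : Fin N → ℝ} (hX : ∑ i, X i = 0) (hX0 : X ≠ 0) :
    ∑ i, X i * (α * sA Fc α r * (r i ^ α * (X i - (∑ j, r j ^ α * X j) / ∑ j, r j ^ α))
        - dK Fc I r X i) < 0 := by
  have := hT.conn.nonempty
  set P := ∑ j, r j ^ α with hPdef
  have hP : 0 < P := sum_rpow_pos α hr.1
  set m := (∑ j, r j ^ α * X j) / P with hm
  have hmP : ∑ j, r j ^ α * X j = m * P := by rw [hm, div_mul_cancel₀ _ hP.ne']
  have hZw : ∑ i, r i ^ α * (X i - m) = 0 := by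
    simp only [mul_sub, Finset.sum_sub_distrib, ← Finset.sum_mul]
    rw [hmP, ← hPdef]; ring
  have hZ : (fun i => X i - m) ≠ 0 := by
    intro h
    have hXm : ∀ i, X i = m := fun i => sub_eq_zero.1 (congrFun h i)
    apply hX0
    have : m = 0 := by
      simp only [hXm, Finset.sum_const, nsmul_eq_mul] at hX
      refine (mul_eq_zero.1 hX).resolve_left ?_
      exact_mod_cast Finset.card_ne_zero.2 Finset.univ_nonempty
    exact funext fun i => by rw [hXm, this]; rfl
  have hgap := curvForm_gap hT hI hr hL hEig hZ hZw
  rw [curvForm_sub_const] at hgap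
  have h1 : ∑ i, r i ^ α * (X i - m) ^ 2 = ∑ i, X i * (r i ^ α * (X i - m)) := by
    have : ∀ i, r i ^ α * (X i - m) ^ 2
        = X i * (r i ^ α * (X i - m)) - m * (r i ^ α * (X i - m)) := fun i => by ring
    simp only [this]
    rw [Finset.sum_sub_distrib, ← Finset.mul_sum, hZw, mul_zero, sub_zero]
  have h2 : ∑ i, X i * (α * sA Fc α r * (r i ^ α * (X i - m)) - dK Fc I r X i)
      = α * sA Fc α r * ∑ i, X i * (r i ^ α * (X i - m)) - curvForm Fc I r X X := by
    rw [← sum_mul_dK, Finset.mul_sum, ← Finset.sum_sub_distrib]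
    exact Finset.sum_congr rfl fun i _ => by ring
  rw [h2, ← h1]
  linarith

/-- local stability under the eigenvalue condition: if r* ∈ Ω has
constant α-curvature and every positive eigenvalue of
Λ_α = Σ*^{−α/2} L(r*) Σ*^{−α/2} exceeds α·s_α(r*) (i.e. λ₁ > α s_α), then
solutions starting near r* (with the same product of radii) exist for all
t ≥ 0 and converge exponentially fast to r*. -/
theorem stmt4 {N : ℕ} (Fc : Finset (Finset (Fin N))) (hT : IsTriangulation Fc)
    (I : Finset (Fin N) → ℝ) (hI : ∀ e ∈ edges Fc, 0 ≤ I e) (α : ℝ)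
    (rstar : Fin N → ℝ) (hrs : rstar ∈ Omega Fc I)
    (hconst : ∀ i : Fin N, K Fc I rstar i = sA Fc α rstar * rstar i ^ α)
    (L : Matrix (Fin N) (Fin N) ℝ)
    (hL : ∀ i j : Fin N, L i j =
      deriv (fun s : ℝ =>
        K Fc I (rOf (Function.update (fun m => Real.log (rstar m)) j s)) i)
        (Real.log (rstar j)))
    (hEig : ∀ lam : ℝ, 0 < lam →
      (∃ v : Fin N → ℝ, v ≠ 0 ∧
        (Matrix.of fun i j => rstar i ^ (-(α / 2)) * L i j * rstar j ^ (-(α / 2))).mulVec v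
          = lam • v) →
      α * sA Fc α rstar < lam) :
    ∃ U ∈ nhds rstar, U ⊆ Omega Fc I ∧
      (∀ u : ℝ → Fin N → ℝ, IsFlowSol Fc I α (Set.Ici 0) u →
        rOf (u 0) ∈ U → (∏ i, Real.exp (u 0 i)) = ∏ i, rstar i →
        ∃ C β : ℝ, 0 < C ∧ 0 < β ∧ ∀ t : ℝ, 0 ≤ t →
          ‖rOf (u t) - rstar‖ ≤ C * Real.exp (-β * t)) ∧
      (∀ u0 : Fin N → ℝ, rOf u0 ∈ U → (∏ i, Real.exp (u0 i)) = ∏ i, rstar i →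
        ∃ u : ℝ → Fin N → ℝ, u 0 = u0 ∧ IsFlowSol Fc I α (Set.Ici 0) u) := by
  have := hT.conn.nonempty
  set p : Fin N → ℝ := fun m => Real.log (rstar m) with hp
  have hrp : rOf p = rstar := rOf_log hrs.1
  have hpΩ : rOf p ∈ Omega Fc I := hrp ▸ hrs
  have hL' : ∀ i j, L i j = dK Fc I rstar (Pi.single j 1) i := fun i j => by
    rw [hL]
    have h := deriv_K_update hT.card3 hI hpΩ i j
    rw [hrp] at h
    exact h
  have hsmooth := contDiffAt_flowField hT.card3 hI α hpΩ
  have hF' : HasFDerivAt (flowField Fc I α) (fderiv ℝ (flowField Fc I α) p) p :=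
    (hsmooth.differentiableAt one_ne_zero).hasFDerivAt
  have hFp : flowField Fc I α p = 0 := funext fun i => by
    rw [flowField, hrp, hconst]; exact sub_self _
  have hline : ∀ X i, fderiv ℝ (flowField Fc I α) p X i
      = α * sA Fc α rstar * (rstar i ^ α * (X i - (∑ j, rstar j ^ α * X j) / ∑ j, rstar j ^ α))
        - dK Fc I rstar X i := by
    intro X i
    have h1 : HasDerivAt (fun t : ℝ => p + t • X) X 0 := by
      simpa using ((hasDerivAt_id (0 : ℝ)).smul_const X).const_add p
    have hF0 : HasFDerivAt (flowField Fc I α) (fderiv ℝ (flowField Fc I α) p)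
        (p + (0 : ℝ) • X) := by
      rw [zero_smul, add_zero]; exact hF'
    have h2 := hF0.comp_hasDerivAt (0 : ℝ) h1
    have h4 := hasDerivAt_flowField hT.card3 hI α hpΩ X i
    rw [hrp] at h4
    exact (hasDerivAt_pi.1 h2 i).unique h4
  obtain ⟨ρ₀, c, hρ₀, hc, hquad⟩ := exists_quadratic_bound hF' hFp fun X hX hX0 => by
    simp only [hline]
    exact linearization_neg hT hI hrs hL' hEig hX hX0
  obtain ⟨κ, W, hW, hlip⟩ := hsmooth.exists_lipschitzOnWith
  have hΩ : rOf ⁻¹' Omega Fc I ∈ 𝓝 p :=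
    ((isOpen_Omega Fc I).preimage contDiff_rOf.continuous).mem_nhds hpΩ
  obtain ⟨δ, hδ, hsub⟩ := Metric.nhds_basis_closedBall.mem_iff.1 (inter_mem hW hΩ)
  set ρ := min ρ₀ (min 1 (δ ^ 2)) with hρdef
  have hρ : 0 < ρ := by positivity
  have hρ1 : ρ ≤ 1 := (min_le_right _ _).trans (min_le_left _ _)
  have hρδ : ρ ≤ δ ^ 2 := (min_le_right _ _).trans (min_le_right _ _)
  have hquad' : ∀ v : Fin N → ℝ, ∑ i, (v i - p i) = 0 → ∑ i, (v i - p i) ^ 2 ≤ ρ →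
      ∑ i, (v i - p i) * flowField Fc I α v i ≤ -c * ∑ i, (v i - p i) ^ 2 :=
    fun v hv hvρ => hquad v hv (hvρ.trans (min_le_left _ _))
  have hprod : ∀ u₀ : Fin N → ℝ, (∏ i, Real.exp (u₀ i)) = ∏ i, rstar i →
      ∑ i, (u₀ i - p i) = 0 := by
    intro u₀ h
    have h1 : ∏ i, rstar i = ∏ i, Real.exp (p i) :=
      Finset.prod_congr rfl fun i _ => (congrFun hrp i).symm
    rw [h1, ← Real.exp_sum, ← Real.exp_sum] at h
    rw [Finset.sum_sub_distrib, Real.exp_injective h, sub_self]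
  set U : Set (Fin N → ℝ) := {r | r ∈ Omega Fc I ∧ ∑ i, (Real.log (r i) - p i) ^ 2 < ρ} with hU
  have hUρ : ∀ u₀ : Fin N → ℝ, rOf u₀ ∈ U → ∑ i, (u₀ i - p i) ^ 2 ≤ ρ := by
    intro u₀ h
    simpa [rOf] using h.2.le
  refine ⟨U, ?_, fun r hr => hr.1, ?_, ?_⟩
  · refine inter_mem ((isOpen_Omega Fc I).mem_nhds hrs) ?_
    have hcont : ContinuousAt (fun r : Fin N → ℝ => ∑ i, (Real.log (r i) - p i) ^ 2) rstar := by
      refine tendsto_finsetSum _ fun i _ => ?_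
      exact (((continuousAt_apply i rstar).log (hrs.1 i).ne').sub continuousAt_const).pow 2
    exact hcont (Iio_mem_nhds (by simpa [hp] using hρ))
  · intro u hu hu0 hpr
    refine ⟨1 + 2 * ∑ i, Real.exp (p i), c / 2, ?_, half_pos hc, fun t ht => ?_⟩
    · have : 0 ≤ ∑ i, Real.exp (p i) := Finset.sum_nonneg fun i _ => (exp_pos _).le
      positivity
    · have hdec := lyapunov_decay (F := flowField Fc I α) hρ hc hquad' (fun t ht => (hu t ht).2)
        (fun t ht => sum_flowField_eq_zero hT.card3 hI hrs hconst (hu t ht).1)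
        (hprod _ hpr) (hUρ _ hu0) ht
      have := norm_exp_sub_le hρ1 hc ht hdec
      rw [← hrp]
      exact this
  · intro u₀ hu0 hpr
    obtain ⟨u, hu0', hu⟩ := exists_solution_near (F := flowField Fc I α) hδ
      (hlip.mono fun v hv => (hsub hv).1)
      (fun v hv => sum_flowField_eq_zero hT.card3 hI hrs hconst (hsub hv).2) hρ hρδ hc hquad'
      (hprod _ hpr) (hUρ _ hu0)
    exact ⟨u, hu0', fun t ht => ⟨(hsub (hu t ht).1).2, (hu t ht).2⟩⟩

end IDCP
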